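/- arXiv:2109.00117 — 7 statements merged into one kernel-verified Lean document; each statement's English description precedes it below -/
import Mathlib

section
/- For every integer n ≥ 1, every Bergman game starting from the initial state ₀(n) has length at most n² + 2n·log_φ n + n (as a real-number bound). In particular every Bergman game from ₀(n) is finite. -/
noncomputable section

/-- The golden ratio. -/
def phi : ℝ := (1 + Real.sqrt 5) / 2

/-- Base-φ logarithm. -/
def logphi (x : ℝ) : ℝ := Real.logb phi x

/-- A Bergman state: a finitely supported function from ℤ to ℕ. -/
abbrev BState := ℤ →₀ ℕ

/-- A split move at index `i`. -/
def SplitAt (S S' : BState) (i : ℤ) : Prop :=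
  2 ≤ S i ∧
    S' = S - Finsupp.single i 2 + Finsupp.single (i + 1) 1 + Finsupp.single (i - 2) 1

/-- A combine move at index `i`. -/
def CombineAt (S S' : BState) (i : ℤ) : Prop :=
  1 ≤ S i ∧ 1 ≤ S (i + 1) ∧
    S' = S - Finsupp.single i 1 - Finsupp.single (i + 1) 1 + Finsupp.single (i + 2) 1

/-- A move is a split or a combine. -/
def Move (S S' : BState) : Prop := (∃ i, SplitAt S S' i) ∨ (∃ i, CombineAt S S' i)

/-- Terminal state: no move is legal. -/
def Terminal (S : BState) : Prop :=
  (∀ i, S i ≤ 1) ∧ ∀ i, ¬(1 ≤ S i ∧ 1 ≤ S (i + 1))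

/-- A Bergman game of length `m` from `S`. -/
def Game (S : BState) (m : ℕ) (g : ℕ → BState) : Prop :=
  g 0 = S ∧ ∀ j < m, Move (g j) (g (j + 1))

/-- A complete Bergman game of length `m` from `S`. -/
def CompleteGame (S : BState) (m : ℕ) (g : ℕ → BState) : Prop :=
  Game S m g ∧ Terminal (g m)

/-- Reachability by a finite sequence of moves. -/
def Reachable : BState → BState → Prop := Relation.ReflTransGen Move

/-- Reachability by split moves only. -/
def SplitReachable : BState → BState → Prop :=
  Relation.ReflTransGen fun S S' => ∃ i, SplitAt S S' i

/-- The initial state `₀(n)`: `n` chips at index 0. -/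
def initState (n : ℕ) : BState := Finsupp.single 0 n

/-- Total number of chips in a state. -/
def chips (S : BState) : ℕ := S.sum fun _ c => c

open Classical in
/-- The number of split moves among the first `m` steps of `g`. -/
def splitCount (g : ℕ → BState) (m : ℕ) : ℕ :=
  ((Finset.range m).filter fun j => ∃ i, SplitAt (g j) (g (j + 1)) i).card

open Classical in
/-- The number of combine moves among the first `m` steps of `g`. -/
def combineCount (g : ℕ → BState) (m : ℕ) : ℕ :=
  ((Finset.range m).filter fun j => ∃ i, CombineAt (g j) (g (j + 1)) i).card



/-- weighted sum of chips -/
def wsum (w : ℤ → ℝ) (S : BState) : ℝ := S.sum fun k c => (c : ℝ) * w k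

/-- conjugate of phi -/
def psi : ℝ := 1 - phi

lemma phi_sq : phi ^ 2 = phi + 1 := by
  have := Real.sq_sqrt (show (0:ℝ) ≤ 5 by norm_num)
  unfold phi; nlinarith

lemma phi_gt : 1 < phi := by
  have : (1:ℝ) < Real.sqrt 5 := Real.lt_sqrt_of_sq_lt (by norm_num)
  unfold phi; linarith

lemma phi_lt : phi < 2 := by
  nlinarith [phi_sq, phi_gt]

lemma psi_sq : psi ^ 2 = psi + 1 := by
  unfold psi; nlinarith [phi_sq]

lemma phi_psi : phi * psi = -1 := by
  unfold psi; nlinarith [phi_sq]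

lemma psi_ne : psi ≠ 0 := by
  intro h; have := phi_psi; rw [h] at this; norm_num at this

lemma wsum_add (w : ℤ → ℝ) (S T : BState) : wsum w (S + T) = wsum w S + wsum w T := by
  unfold wsum
  exact Finsupp.sum_add_index' (by simp) (by intros; push_cast; ring)

lemma wsum_single (w : ℤ → ℝ) (i : ℤ) (c : ℕ) : wsum w (Finsupp.single i c) = c * w i := by
  unfold wsum
  exact Finsupp.sum_single_index (by simp)

lemma chips_add (S T : BState) : chips (S + T) = chips S + chips T := by
  unfold chips
  exact Finsupp.sum_add_index' (by simp) (by intros; rfl)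

lemma chips_single (i : ℤ) (c : ℕ) : chips (Finsupp.single i c) = c := by
  unfold chips
  exact Finsupp.sum_single_index rfl

lemma wsum_shift (a : ℝ) (S : BState) :
    wsum (fun k => (k : ℝ) + a) S = wsum (fun k => (k : ℝ)) S + a * chips S := by
  unfold wsum chips Finsupp.sum
  push_cast
  rw [Finset.mul_sum, ← Finset.sum_add_distrib]
  exact Finset.sum_congr rfl fun k _ => by ring

lemma wsum_nonneg (w : ℤ → ℝ) (S : BState) (h : ∀ k, 1 ≤ S k → 0 ≤ w k) : 0 ≤ wsum w S := by
  unfold wsum Finsupp.sum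
  refine Finset.sum_nonneg fun k hk => mul_nonneg (by positivity) (h k ?_)
  have := Finsupp.mem_support_iff.1 hk
  omega

lemma card_le_chips (S : BState) : S.support.card ≤ chips S := by
  unfold chips Finsupp.sum
  rw [Finset.card_eq_sum_ones]
  refine Finset.sum_le_sum fun k hk => ?_
  have := Finsupp.mem_support_iff.1 hk
  change 1 ≤ S k
  omega

lemma split_decomp {S S' : BState} {i : ℤ} (h : SplitAt S S' i) :
    ∃ R : BState, S = R + Finsupp.single i 2 ∧
      S' = R + Finsupp.single (i + 1) 1 + Finsupp.single (i - 2) 1 := by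
  refine ⟨S - Finsupp.single i 2, ?_, h.2⟩
  rw [tsub_add_cancel_of_le]
  exact Finsupp.single_le_iff.2 h.1

lemma combine_decomp {S S' : BState} {i : ℤ} (h : CombineAt S S' i) :
    ∃ R : BState, S = R + Finsupp.single i 1 + Finsupp.single (i + 1) 1 ∧
      S' = R + Finsupp.single (i + 2) 1 := by
  refine ⟨S - Finsupp.single i 1 - Finsupp.single (i + 1) 1, ?_, h.2.2⟩
  ext k
  have h1 := h.1
  have h2 := h.2.1
  simp only [Finsupp.add_apply, Finsupp.tsub_apply, Finsupp.single_apply]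
  split_ifs with a b b
  · omega
  · subst a; omega
  · subst b; omega
  · omega

lemma conj_split {S S' : BState} {i : ℤ} (h : SplitAt S S' i) :
    wsum (fun k => psi ^ k) S' = wsum (fun k => psi ^ k) S := by
  obtain ⟨R, rfl, rfl⟩ := split_decomp h
  simp only [wsum_add, wsum_single]
  have e0 : psi ^ i = psi ^ (i - 2) * psi ^ 2 := by
    rw [← zpow_natCast, ← zpow_add₀ psi_ne]; congr 1; push_cast; ring
  have e1 : psi ^ (i + 1) = psi ^ (i - 2) * psi ^ 3 := by
    rw [← zpow_natCast, ← zpow_add₀ psi_ne]; congr 1; push_cast; ring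
  rw [e0, e1]
  have : psi ^ 3 + 1 = 2 * psi ^ 2 := by linear_combination (psi - 1) * psi_sq
  push_cast
  linear_combination psi ^ (i - 2) * this

lemma conj_combine {S S' : BState} {i : ℤ} (h : CombineAt S S' i) :
    wsum (fun k => psi ^ k) S' = wsum (fun k => psi ^ k) S := by
  obtain ⟨R, rfl, rfl⟩ := combine_decomp h
  simp only [wsum_add, wsum_single]
  rw [zpow_add₀ psi_ne, zpow_add₀ psi_ne, zpow_one]
  have e : psi ^ (2 : ℤ) = psi + 1 := by exact_mod_cast psi_sq
  rw [e]
  push_cast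
  ring

lemma geo_bound (S : BState) (h1 : ∀ k, S k ≤ 1) (N : ℕ) : ∀ l : ℤ,
    -1 ≤ ∑ d ∈ Finset.range N, (S (l + d) : ℝ) * psi ^ d ∧
    ∑ d ∈ Finset.range N, (S (l + d) : ℝ) * psi ^ d ≤ phi := by
  induction N with
  | zero => intro l; simp; linarith [phi_gt]
  | succ N ih =>
    intro l
    obtain ⟨ha, hb⟩ := ih (l + 1)
    have e : ∑ d ∈ Finset.range (N + 1), (S (l + d) : ℝ) * psi ^ d =
        S l + psi * ∑ d ∈ Finset.range N, (S (l + 1 + d) : ℝ) * psi ^ d := by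
      rw [Finset.sum_range_succ', Finset.mul_sum, add_comm]
      congr 1
      · simp
      · refine Finset.sum_congr rfl fun d _ => ?_
        rw [pow_succ]
        have : l + ((d + 1 : ℕ) : ℤ) = l + 1 + d := by push_cast; ring
        rw [this]; ring
    rw [e]
    have hs : (S l : ℝ) ≤ 1 := by exact_mod_cast h1 l
    have hs0 : (0 : ℝ) ≤ S l := by positivity
    have hp : psi < 0 := by unfold psi; linarith [phi_gt]
    have hpp : psi = 1 - phi := rfl
    constructor
    · nlinarith [phi_psi]
    · nlinarith

lemma wsum_range (S : BState) (l : ℤ) (hl : ∀ k, 1 ≤ S k → l ≤ k) :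
    ∃ N : ℕ, wsum (fun k => psi ^ k) S =
      psi ^ l * ∑ d ∈ Finset.range (N + 2), (S (l + d) : ℝ) * psi ^ d := by
  obtain ⟨b, hb⟩ := S.support.bddAbove
  refine ⟨(b - l + 1).toNat, ?_⟩
  have e : psi ^ l * ∑ d ∈ Finset.range ((b - l + 1).toNat + 2), (S (l + d) : ℝ) * psi ^ d =
      ∑ k ∈ (Finset.range ((b - l + 1).toNat + 2)).image (fun d : ℕ => l + (d : ℤ)),
        (S k : ℝ) * psi ^ k := by
    rw [Finset.sum_image (fun x _ y _ h => by simpa using h), Finset.mul_sum]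
    refine Finset.sum_congr rfl fun d _ => ?_
    rw [zpow_add₀ psi_ne, zpow_natCast]; ring
  rw [e]
  unfold wsum Finsupp.sum
  refine Finset.sum_subset ?_ ?_
  · intro k hk
    have h1 := hb hk
    have h2 := hl k (by have := Finsupp.mem_support_iff.1 hk; omega)
    rw [Finset.mem_image]
    exact ⟨(k - l).toNat, by rw [Finset.mem_range]; omega, by omega⟩
  · intro k _ hk
    rw [Finsupp.notMem_support_iff.1 hk]; simp

lemma terminal_bound (n : ℕ) (hn : 1 ≤ n) (S : BState) (hT : Terminal S)
    (hc : wsum (fun k => psi ^ k) S = n) (k : ℤ) (hk : 1 ≤ S k) :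
    -(1 + logphi n) ≤ (k : ℝ) := by
  have hne : S.support.Nonempty := ⟨k, by rw [Finsupp.mem_support_iff]; omega⟩
  set l := S.support.min' hne with hl
  have hmem : l ∈ S.support := Finset.min'_mem _ _
  have hmin : ∀ k, 1 ≤ S k → l ≤ k := fun k hk =>
    Finset.min'_le _ _ (by rw [Finsupp.mem_support_iff]; omega)
  have hl1 : S l = 1 := by
    have := hT.1 l
    have := Finsupp.mem_support_iff.1 hmem
    omega
  have hl2 : S (l + 1) = 0 := by
    have := hT.2 l
    omega
  obtain ⟨N, hN⟩ := wsum_range S l hmin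
  have hy : 1 - psi ^ 2 ≤ ∑ d ∈ Finset.range (N + 2), (S (l + d) : ℝ) * psi ^ d := by
    rw [Finset.sum_range_succ', Finset.sum_range_succ']
    have e : ∑ d ∈ Finset.range N, (S (l + ((d + 1 + 1 : ℕ) : ℤ)) : ℝ) * psi ^ (d + 1 + 1) =
        psi ^ 2 * ∑ d ∈ Finset.range N, (S (l + 2 + d) : ℝ) * psi ^ d := by
      rw [Finset.mul_sum]
      refine Finset.sum_congr rfl fun d _ => ?_
      have : l + ((d + 1 + 1 : ℕ) : ℤ) = l + 2 + d := by push_cast; ring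
      rw [this]; ring
    rw [e]
    have := (geo_bound S hT.1 N (l + 2)).1
    simp [hl1, hl2]
    nlinarith [sq_nonneg psi]
  have hpp : psi = 1 - phi := rfl
  have hphi := phi_gt
  have hy' : phi⁻¹ ≤ ∑ d ∈ Finset.range (N + 2), (S (l + d) : ℝ) * psi ^ d := by
    have : phi⁻¹ = 1 - psi ^ 2 := by
      refine inv_eq_of_mul_eq_one_right ?_
      linear_combination (-phi) * psi_sq - phi_psi
    rw [this]; exact hy
  have habs : phi ^ (-l) * phi⁻¹ ≤ (n : ℝ) := by
    have h1 : |(n : ℝ)| = |psi| ^ l * |∑ d ∈ Finset.range (N + 2), (S (l + d) : ℝ) * psi ^ d| := by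
      rw [← hc, hN, abs_mul, abs_zpow]
    have h2 : |psi| = phi⁻¹ := by
      rw [abs_of_neg (by linarith)]
      exact eq_inv_of_mul_eq_one_left (by linarith [phi_psi])
    rw [h2, inv_zpow', Nat.abs_cast] at h1
    rw [h1]
    have : 0 < phi ^ (-l) := by positivity
    gcongr
    exact hy'.trans (le_abs_self _)
  have hpos : (0:ℝ) < n := by exact_mod_cast hn
  have hlog : ((-l - 1 : ℤ) : ℝ) ≤ logphi n := by
    unfold logphi
    rw [Real.le_logb_iff_rpow_le hphi hpos, Real.rpow_intCast]
    rwa [zpow_sub_one₀ (by linarith)]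
  have : (l : ℝ) ≤ k := by exact_mod_cast hmin k hk
  push_cast at hlog
  linarith

/-- lower bound on the positions and on the potential -/
def Good (a : ℝ) (S : BState) : Prop :=
  (∀ k, 1 ≤ S k → -a - 2 * ((chips S : ℝ) - 1) ≤ (k : ℝ)) ∧
    2 ≤ wsum (fun k => (k : ℝ)) S + a * chips S + chips S * (chips S + 1)

lemma combine_P {a : ℝ} {S S' : BState} {i : ℤ} (h : CombineAt S S' i)
    (hi : -a - 2 * ((chips S : ℝ) - 1) ≤ (i : ℝ)) :
    wsum (fun k => (k : ℝ)) S' + a * chips S' + chips S' * (chips S' + 1) + 1 ≤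
      wsum (fun k => (k : ℝ)) S + a * chips S + chips S * (chips S + 1) := by
  obtain ⟨R, rfl, rfl⟩ := combine_decomp h
  simp only [wsum_add, wsum_single, chips_add, chips_single] at *
  push_cast at *
  nlinarith

lemma split_P {a : ℝ} {S S' : BState} {i : ℤ} (h : SplitAt S S' i) :
    wsum (fun k => (k : ℝ)) S' + a * chips S' + chips S' * (chips S' + 1) + 1 =
      wsum (fun k => (k : ℝ)) S + a * chips S + chips S * (chips S + 1) := by
  obtain ⟨R, rfl, rfl⟩ := split_decomp h
  simp only [wsum_add, wsum_single, chips_add, chips_single] at *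
  push_cast at *
  ring

lemma split_chips {S S' : BState} {i : ℤ} (h : SplitAt S S' i) : chips S' = chips S := by
  obtain ⟨R, rfl, rfl⟩ := split_decomp h
  simp only [chips_add, chips_single]

lemma combine_chips {S S' : BState} {i : ℤ} (h : CombineAt S S' i) :
    chips S = chips S' + 1 := by
  obtain ⟨R, rfl, rfl⟩ := combine_decomp h
  simp only [chips_add, chips_single]

lemma good_combine {a : ℝ} {S S' : BState} {i : ℤ} (h : CombineAt S S' i) (hg : Good a S') :
    Good a S := by
  have hc := combine_chips h
  have key : ∀ k, 1 ≤ S k → -a - 2 * ((chips S : ℝ) - 1) ≤ (k : ℝ) := by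
    intro k hk
    rw [hc]; push_cast
    by_cases hk' : 1 ≤ S' k
    · linarith [hg.1 k hk']
    · obtain ⟨R, rfl, rfl⟩ := combine_decomp h
      have h2 := hg.1 (i + 2) (by simp)
      push_cast at h2
      have : i ≤ k := by
        simp only [Finsupp.add_apply, Finsupp.single_apply] at hk hk'
        split_ifs at hk hk' <;> omega
      have : (i : ℝ) ≤ k := by exact_mod_cast this
      linarith
  refine ⟨key, ?_⟩
  linarith [combine_P h (key i h.1), hg.2]

lemma good_split {a : ℝ} {S S' : BState} {i : ℤ} (h : SplitAt S S' i) (hg : Good a S') :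
    Good a S := by
  have hc := split_chips h
  refine ⟨?_, by linarith [@split_P a _ _ _ h, hg.2]⟩
  intro k hk
  rw [← hc]
  by_cases hk' : 1 ≤ S' k
  · linarith [hg.1 k hk']
  · obtain ⟨R, rfl, rfl⟩ := split_decomp h
    have h2 := hg.1 (i - 2) (by simp)
    push_cast at h2
    have : i ≤ k := by
      simp only [Finsupp.add_apply, Finsupp.single_apply] at hk hk'
      split_ifs at hk hk' <;> omega
    have : (i : ℝ) ≤ k := by exact_mod_cast this
    linarith

lemma split_card {S S' : BState} {i : ℤ} (h : SplitAt S S' i) (h0 : S (i + 1) = 0) :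
    S.support.card < S'.support.card ∨
      (S.support.card ≤ S'.support.card ∧ 1 ≤ S (i - 2)) := by
  have hi := h.1
  have hval : ∀ k, S' k = (S k - if i = k then 2 else 0) + (if i + 1 = k then 1 else 0) +
      (if i - 2 = k then 1 else 0) := by
    intro k
    rw [h.2]
    simp [Finsupp.single_apply]
  have hni : i + 1 ∉ S.support.erase i := by simp [h0]
  have hcard : (insert (i + 1) (S.support.erase i)).card = S.support.card := by
    rw [Finset.card_insert_of_notMem hni, Finset.card_erase_add_one]
    rw [Finsupp.mem_support_iff]; omega
  have hsub : insert (i + 1) (S.support.erase i) ⊆ S'.support := by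
    intro k hk
    rw [Finset.mem_insert, Finset.mem_erase, Finsupp.mem_support_iff] at hk
    rw [Finsupp.mem_support_iff, hval]
    rcases hk with rfl | ⟨hk, hk'⟩
    · simp
    · rw [if_neg (Ne.symm hk)]; omega
  by_cases h2 : 1 ≤ S (i - 2)
  · right
    exact ⟨hcard ▸ Finset.card_le_card hsub, h2⟩
  · left
    have hn2 : i - 2 ∉ insert (i + 1) (S.support.erase i) := by
      rw [Finset.mem_insert, Finset.mem_erase, Finsupp.mem_support_iff]
      omega
    have : insert (i - 2) (insert (i + 1) (S.support.erase i)) ⊆ S'.support := by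
      rw [Finset.insert_subset_iff]
      refine ⟨?_, hsub⟩
      rw [Finsupp.mem_support_iff, hval]; simp
    have := Finset.card_le_card this
    rw [Finset.card_insert_of_notMem hn2, hcard] at this
    omega

lemma good_of_conj (n : ℕ) (hn : 1 ≤ n) : ∀ r e t : ℕ, ∀ S : BState, ∀ l : ℤ,
    chips S < r → chips S < e + S.support.card → (∀ k, 1 ≤ S k → l ≤ k) →
    wsum (fun k => (k : ℝ) + (-l)) S < t → wsum (fun k => psi ^ k) S = n →
    Good (1 + logphi n) S := by
  intro r
  induction r with
  | zero => intro e t S l h; omega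
  | succ r ihr =>
  intro e
  induction e with
  | zero => intro t S l _ h; have := card_le_chips S; omega
  | succ e ihe =>
  intro t
  induction t with
  | zero =>
    intro S l _ _ hl h
    exfalso
    have : 0 ≤ wsum (fun k => (k : ℝ) + (-l)) S := wsum_nonneg _ _ fun k hk => by
      have : (l : ℝ) ≤ k := by exact_mod_cast hl k hk
      linarith
    push_cast at h
    linarith
  | succ t iht =>
  intro S l hr he hl ht hc
  by_cases hcomb : ∃ i, 1 ≤ S i ∧ 1 ≤ S (i + 1)
  · obtain ⟨i, h1, h2⟩ := hcomb
    have hm : CombineAt S _ i := ⟨h1, h2, rfl⟩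
    refine good_combine hm ?_
    have hch := combine_chips hm
    set S' := S - Finsupp.single i 1 - Finsupp.single (i + 1) 1 + Finsupp.single (i + 2) 1
    obtain ⟨t', ht'⟩ := exists_nat_gt (wsum (fun k => (k : ℝ) + (-l)) S')
    refine ihr (chips S' + 1) t' S' l (by omega) (by omega) ?_ ht' ((conj_combine hm).trans hc)
    intro k hk
    have hli := hl i h1
    have hlk := hl k
    simp only [S', Finsupp.add_apply, Finsupp.tsub_apply, Finsupp.single_apply] at hk
    split_ifs at hk <;> omega
  by_cases hsplit : ∃ i, 2 ≤ S i
  · obtain ⟨i, h1⟩ := hsplit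
    have h0 : S (i + 1) = 0 := by
      by_contra h0
      exact hcomb ⟨i, by omega, by omega⟩
    have hm : SplitAt S _ i := ⟨h1, rfl⟩
    refine good_split hm ?_
    have hch := split_chips hm
    have hcard := split_card hm h0
    have hcj := (conj_split hm).trans hc
    have hP := @split_P 0 _ _ _ hm
    have hli := hl i (by omega)
    set S' := S - Finsupp.single i 2 + Finsupp.single (i + 1) 1 + Finsupp.single (i - 2) 1
    rcases hcard with hcard | ⟨hcard, h2⟩
    · obtain ⟨t', ht'⟩ := exists_nat_gt (wsum (fun k => (k : ℝ) + (-(l - 2 : ℤ))) S')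
      refine ihe t' S' (l - 2) (by omega) (by omega) ?_ ht' hcj
      intro k hk
      have hlk := hl k
      simp only [S', Finsupp.add_apply, Finsupp.tsub_apply, Finsupp.single_apply] at hk
      split_ifs at hk <;> omega
    · refine iht S' l (by omega) (by omega) ?_ ?_ hcj
      · intro k hk
        have hlk := hl k
        have hl2 := hl _ h2
        simp only [S', Finsupp.add_apply, Finsupp.tsub_apply, Finsupp.single_apply] at hk
        split_ifs at hk <;> omega
      · rw [wsum_shift] at ht ⊢
        rw [hch] at hP ⊢
        push_cast at ht
        linarith
  · have hT : Terminal S := ⟨fun i => by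
      by_contra h; exact hsplit ⟨i, by omega⟩, fun i h => hcomb ⟨i, h⟩⟩
    have hb := terminal_bound n hn S hT hc
    have hpos : 1 ≤ chips S := by
      by_contra h
      have h3 := card_le_chips S
      have h4 : S.support = ∅ := Finset.card_eq_zero.1 (by omega)
      have h5 : S = 0 := Finsupp.support_eq_empty.1 h4
      have hz : wsum (fun k => psi ^ k) 0 = 0 := Finsupp.sum_zero_index
      rw [h5, hz] at hc
      norm_cast at hc
      omega
    have hposR : (1 : ℝ) ≤ chips S := by exact_mod_cast hpos
    refine ⟨fun k hk => by linarith [hb k hk], ?_⟩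
    have h6 : 0 ≤ wsum (fun k => (k : ℝ) + (1 + logphi n)) S :=
      wsum_nonneg _ _ fun k hk => by linarith [hb k hk]
    rw [wsum_shift] at h6
    nlinarith

/-- Every Bergman game from `₀(n)` has length at most `n² + 2n·log_φ n + n`;
in particular every Bergman game from `₀(n)` is finite. -/
theorem bergman_game_length_upper_bound (n : ℕ) (hn : 1 ≤ n)
    (m : ℕ) (g : ℕ → BState) (hg : Game (initState n) m g) :
    (m : ℝ) ≤ (n : ℝ) ^ 2 + 2 * n * logphi n + n := by
  obtain ⟨h0, hstep⟩ := hg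
  have good : ∀ S : BState, wsum (fun k => psi ^ k) S = n → Good (1 + logphi n) S := by
    intro S hS
    obtain ⟨l, hl⟩ := S.support.bddBelow
    obtain ⟨t, ht⟩ := exists_nat_gt (wsum (fun k => (k : ℝ) + (-l)) S)
    exact good_of_conj n hn (chips S + 1) (chips S + 1) t S l (by omega) (by omega)
      (fun k hk => hl (by rw [Finset.mem_coe, Finsupp.mem_support_iff]; omega)) ht hS
  have main : ∀ j, j ≤ m → wsum (fun k => psi ^ k) (g j) = n ∧
      wsum (fun k => (k : ℝ)) (g j) + (1 + logphi n) * chips (g j) +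
        chips (g j) * (chips (g j) + 1) + j ≤ (1 + logphi n) * n + n * (n + 1) := by
    intro j
    induction j with
    | zero =>
      intro _
      rw [h0]
      simp [initState, wsum_single, chips_single]
    | succ j ih =>
      intro hj
      obtain ⟨hc, hP⟩ := ih (by omega)
      have hG := good _ hc
      push_cast
      rcases hstep j (by omega) with ⟨i, hi⟩ | ⟨i, hi⟩
      · refine ⟨(conj_split hi).trans hc, ?_⟩
        linarith [@split_P (1 + logphi n) _ _ _ hi]
      · refine ⟨(conj_combine hi).trans hc, ?_⟩
        linarith [combine_P hi (hG.1 i hi.1)]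
  obtain ⟨hc, hP⟩ := main m le_rfl
  have hG := (good _ hc).2
  have hfin : (n : ℝ) - 2 ≤ n * logphi n := by
    rcases Nat.lt_or_ge n 2 with h | h
    · have : n = 1 := by omega
      subst this
      simp [logphi]
    · have hn2 : (2 : ℝ) ≤ n := by exact_mod_cast h
      have : 1 ≤ logphi n := by
        unfold logphi
        rw [Real.le_logb_iff_rpow_le phi_gt (by linarith), Real.rpow_one]
        linarith [phi_lt]
      nlinarith
  nlinarith
end
end

section
/- For every integer n ≥ 20, there exists a complete Bergman game starting from ₀(n) whose length is at least n² − 6n − 3n·log_φ n + 5·log_φ n + 2(log_φ n)² − 1 (as a real-number bound). Hence the maximal game length from ₀(n) has leading term n². -/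
noncomputable section

lemma phi_pos : 0 < phi := by unfold phi; positivity

lemma phi_gt_s1 : 1.6 ≤ phi := by
  unfold phi
  have : (2.2:ℝ) ≤ Real.sqrt 5 := by
    apply Real.le_sqrt_of_sq_le; norm_num
  linarith

lemma phi_rec (i : ℤ) : phi ^ (i + 2) = phi ^ (i + 1) + phi ^ i := by
  have h := phi_pos.ne'
  rw [zpow_add₀ h, zpow_add₀ h, zpow_one]
  have := phi_sq
  have e : phi ^ (2:ℤ) = phi + 1 := by rw [← this]; norm_cast
  rw [e]; ring

/-- Linear weight functional. -/
def Wt (f : ℤ → ℝ) (S : BState) : ℝ := S.sum fun i c => (c : ℝ) * f i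

lemma Wt_add (f : ℤ → ℝ) (S T : BState) : Wt f (S + T) = Wt f S + Wt f T := by
  unfold Wt
  apply Finsupp.sum_add_index'
  · intro a; simp
  · intro a b c; push_cast; ring

lemma Wt_single (f : ℤ → ℝ) (i : ℤ) (c : ℕ) : Wt f (Finsupp.single i c) = c * f i := by
  unfold Wt
  apply Finsupp.sum_single_index; simp

lemma Wt_split (f : ℤ → ℝ) {S S' : BState} {i : ℤ} (h : SplitAt S S' i) :
    Wt f S' = Wt f S - 2 * f i + f (i + 1) + f (i - 2) := by
  obtain ⟨h2, rfl⟩ := h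
  have hle : Finsupp.single i 2 ≤ S := by
    rw [Finsupp.single_le_iff]; exact h2
  have e := tsub_add_cancel_of_le hle
  have := congrArg (Wt f) e
  rw [Wt_add, Wt_single] at this
  rw [Wt_add, Wt_add, Wt_single, Wt_single]
  push_cast at *
  linarith

/-- `m` moves lead from `S` to `S'`. -/
inductive Steps (S : BState) : ℕ → BState → Prop
  | refl : Steps S 0 S
  | tail {m : ℕ} {T U : BState} : Steps S m T → Move T U → Steps S (m + 1) U

lemma Steps.trans {S T U : BState} {m k : ℕ} (h : Steps S m T) (h' : Steps T k U) :
    Steps S (m + k) U := by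
  induction h' with
  | refl => exact h
  | tail _ mv ih => exact ih.tail mv

lemma Steps.game {S T : BState} {m : ℕ} (h : Steps S m T) :
    ∃ g : ℕ → BState, Game S m g ∧ g m = T := by
  induction h with
  | refl => exact ⟨fun _ => S, ⟨rfl, by simp⟩, rfl⟩
  | @tail m T U _ mv ih =>
    obtain ⟨g, ⟨h0, hg⟩, hm⟩ := ih
    refine ⟨fun j => if j ≤ m then g j else U, ⟨by simpa using h0, ?_⟩, by simp⟩
    intro j hj
    rcases Nat.lt_succ_iff_lt_or_eq.mp hj with h | h
    · have h1 : j ≤ m := h.le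
      have h2 : j + 1 ≤ m := h
      simpa [h1, h2] using hg j h
    · subst h
      simpa [hm] using mv

lemma chips_combine {S S' : BState} {i : ℤ} (h : CombineAt S S' i) :
    Wt (fun _ => 1) S' = Wt (fun _ => 1) S - 1 := by
  obtain ⟨h1, h2, rfl⟩ := h
  have hle : Finsupp.single i 1 ≤ S := by
    rw [Finsupp.single_le_iff]; exact h1
  have hle2 : Finsupp.single (i+1) 1 ≤ S - Finsupp.single i 1 := by
    rw [Finsupp.single_le_iff]; simpa using h2
  have e := congrArg (Wt fun _ => 1) (tsub_add_cancel_of_le hle)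
  have e2 := congrArg (Wt fun _ => 1) (tsub_add_cancel_of_le hle2)
  rw [Wt_add, Wt_single] at e e2 ⊢
  push_cast at *
  linarith

lemma Wt_one_nonneg (S : BState) : 0 ≤ Wt (fun _ => 1) S := by
  unfold Wt
  apply Finset.sum_nonneg; intro i _; positivity

lemma finish (k : ℕ) : ∀ S : BState, (∀ i, S i ≤ 1) → Wt (fun _ => 1) S ≤ k →
    ∃ m T, Steps S m T ∧ Terminal T := by
  induction k with
  | zero =>
    intro S hS hk
    by_cases hT : ∀ i, ¬(1 ≤ S i ∧ 1 ≤ S (i + 1))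
    · exact ⟨0, S, .refl, hS, hT⟩
    · push Not at hT
      obtain ⟨i, h1, h2⟩ := hT
      have := chips_combine (S := S) ⟨h1, h2, rfl⟩
      have h3 := Wt_one_nonneg (S - Finsupp.single i 1 - Finsupp.single (i + 1) 1 + Finsupp.single (i + 2) 1)
      push_cast at hk
      linarith
  | succ k ih =>
    intro S hS hk
    by_cases hT : ∀ i, ¬(1 ≤ S i ∧ 1 ≤ S (i + 1))
    · exact ⟨0, S, .refl, hS, hT⟩
    · push Not at hT
      let P := S.support.filter fun i => 1 ≤ S (i + 1)
      have hP : P.Nonempty := by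
        obtain ⟨i, h1, h2⟩ := hT
        exact ⟨i, by simp only [P, Finset.mem_filter, Finsupp.mem_support_iff]; omega⟩
      have hm := P.max'_mem hP
      set i := P.max' hP with hi
      have hmax : ∀ j ∈ P, j ≤ i := fun j hj => P.le_max' j hj
      simp only [P, Finset.mem_filter, Finsupp.mem_support_iff] at hm hmax
      have h2 : S (i + 2) = 0 := by
        by_contra hne
        have := hmax (i + 1) ⟨by omega, by rw [add_assoc]; norm_num; omega⟩
        omega
      have hc : CombineAt S (S - Finsupp.single i 1 - Finsupp.single (i + 1) 1 + Finsupp.single (i + 2) 1) i :=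
        ⟨by omega, hm.2, rfl⟩
      have hw := chips_combine hc
      obtain ⟨m, T, hst, hT⟩ := ih (S - Finsupp.single i 1 - Finsupp.single (i + 1) 1 + Finsupp.single (i + 2) 1) (by
        intro j
        have := hS j
        simp only [Finsupp.add_apply, Finsupp.tsub_apply, Finsupp.single_apply]
        by_cases hj : i + 2 = j
        · subst hj; rw [h2]; simp
        · simp [hj]; omega) (by rw [hw]; push_cast at hk; linarith)
      exact ⟨_, T, (Steps.refl.tail (Or.inr ⟨i, hc⟩)).trans hst, hT⟩

/-- Window invariant. -/
def Win (S : BState) : Prop :=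
  ∀ j : ℤ, j ≤ 0 → (∃ i ≤ j, 1 ≤ S i) → ∃ i, j ≤ i ∧ i ≤ j + 2 ∧ 1 ≤ S i

lemma Win_split {S S' : BState} {i : ℤ} (hW : Win S) (h : SplitAt S S' i) : Win S' := by
  obtain ⟨h2, rfl⟩ := h
  intro j hj ⟨a, ha, hSa⟩
  simp only [Finsupp.add_apply, Finsupp.tsub_apply, Finsupp.single_apply] at hSa ⊢
  by_cases hin : j ≤ i ∧ i ≤ j + 2
  · by_cases h3 : i = j + 2
    · exact ⟨i - 2, by omega, by omega, by simp⟩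
    · exact ⟨i + 1, by omega, by omega, by rw [if_pos (rfl : i + 1 = i + 1)]; omega⟩
  · have hex : ∃ b ≤ j, 1 ≤ S b := by
      by_cases hij : i ≤ j
      · exact ⟨i, hij, by omega⟩
      · refine ⟨a, ha, ?_⟩
        have e1 : ¬ i = a := by omega
        have e2 : ¬ i + 1 = a := by omega
        have e3 : ¬ i - 2 = a := by omega
        simpa [e1, e2, e3] using hSa
    obtain ⟨b, hb1, hb2, hb3⟩ := hW j hj hex
    refine ⟨b, hb1, hb2, ?_⟩
    have : ¬ i = b := by omega
    simp [this]; omega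

lemma Win_bound {S : BState} {n : ℕ} (hW : Win S) (hn : Wt (fun _ => 1) S = n)
    {i : ℤ} (hi : 1 ≤ S i) : -(3 * n : ℤ) ≤ i := by
  by_contra hlt
  push Not at hlt
  have hex : ∀ t : ℕ, ∃ a, t ≤ n → (i + 3 * t ≤ a ∧ a ≤ i + 3 * t + 2 ∧ 1 ≤ S a) := by
    intro t
    by_cases ht : t ≤ n
    · obtain ⟨a, ha⟩ := hW (i + 3 * t) (by omega) ⟨i, by omega, hi⟩
      exact ⟨a, fun _ => ha⟩
    · exact ⟨0, fun h => absurd h ht⟩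
  choose a ha using hex
  have hcard : (Finset.range (n + 1)).card ≤ S.support.card := by
    apply Finset.card_le_card_of_injOn a
    · intro t ht
      have := ha t (by simp at ht; omega)
      simp only [Finset.mem_coe, Finsupp.mem_support_iff]; omega
    · intro t ht u hu htu
      have h1 := ha t (by simp at ht; omega)
      have h2 := ha u (by simp at hu; omega)
      omega
  have : (S.support.card : ℝ) ≤ Wt (fun _ => 1) S := by
    unfold Wt Finsupp.sum
    rw [Finset.card_eq_sum_ones]; push_cast
    apply Finset.sum_le_sum
    intro j hj
    have : 1 ≤ S j := Nat.one_le_iff_ne_zero.mpr (Finsupp.mem_support_iff.mp hj)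
    have : (1:ℝ) ≤ S j := by exact_mod_cast this
    linarith
  rw [hn] at this
  have : S.support.card ≤ n := by exact_mod_cast this
  simp at hcard; omega

/-- Invariants of the split phase. -/
def SInv (n m : ℕ) (S : BState) : Prop :=
  Steps (initState n) m S ∧ Win S ∧ Wt (fun _ => 1) S = n ∧
  Wt (fun i => (i : ℝ)) S = -m ∧ Wt (fun i => phi ^ i) S = n ∧
  Wt (fun i => (-phi) ^ (-i)) S = n

lemma Inv_bound {n m : ℕ} {S : BState} (h : SInv n m S) : m ≤ 3 * n * n := by
  obtain ⟨-, hW, h1, h2, -, -⟩ := h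
  have : 0 ≤ Wt (fun i => (i : ℝ)) S + 3 * n * Wt (fun _ => 1) S := by
    unfold Wt Finsupp.sum
    rw [Finset.mul_sum, ← Finset.sum_add_distrib]
    apply Finset.sum_nonneg
    intro i hi
    have : 1 ≤ S i := Nat.one_le_iff_ne_zero.mpr (Finsupp.mem_support_iff.mp hi)
    have h3 := Win_bound hW h1 this
    have h4 : -(3 * n : ℝ) ≤ i := by exact_mod_cast h3
    have h5 : (0:ℝ) ≤ S i := by positivity
    nlinarith
  rw [h1, h2] at this
  have : (m : ℝ) ≤ 3 * n * n := by linarith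
  exact_mod_cast this

lemma Inv_init (n : ℕ) : SInv n 0 (initState n) := by
  refine ⟨.refl, ?_, ?_, ?_, ?_, ?_⟩
  · intro j hj ⟨i, hi, h⟩
    simp only [initState, Finsupp.single_apply] at *
    split_ifs at h with h0
    · exact ⟨0, by omega, by omega, by simpa using h⟩
    · omega
  all_goals simp [initState, Wt_single]

lemma neg_phi_rec (i : ℤ) :
    (-phi) ^ (-(i+1)) + (-phi) ^ (-(i-2)) = 2 * (-phi) ^ (-i) := by
  have h : (-phi) ≠ 0 := neg_ne_zero.mpr phi_pos.ne'
  have e1 : (-phi) ^ (-i) = (-phi) ^ (-(i+1)) * (-phi) := by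
    rw [show -i = -(i+1) + 1 by ring, zpow_add₀ h, zpow_one]
  have e2 : (-phi) ^ (-(i-2)) = (-phi) ^ (-(i+1)) * (-phi)^3 := by
    rw [show -(i-2) = -(i+1) + (3:ℕ) by push_cast; ring, zpow_add₀ h, zpow_natCast]
  rw [e1, e2]
  have h3 : phi^3 = 2 * phi + 1 := by
    have := phi_sq
    calc phi^3 = phi * phi^2 := by ring
      _ = phi^2 + phi := by rw [this]; nlinarith
      _ = _ := by rw [this]; ring
  have : (-phi)^3 = -(2*phi+1) := by rw [← h3]; ring
  rw [this]; ring

lemma Inv_step {n m : ℕ} {S S' : BState} {i : ℤ} (h : SInv n m S) (hs : SplitAt S S' i) :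
    SInv n (m + 1) S' := by
  obtain ⟨h0, hW, h1, h2, h3, h4⟩ := h
  refine ⟨h0.tail (Or.inl ⟨i, hs⟩), Win_split hW hs, ?_, ?_, ?_, ?_⟩
  · rw [Wt_split _ hs, h1]; ring
  · rw [Wt_split _ hs, h2]; push_cast; ring
  · rw [Wt_split _ hs, h3]
    have a := phi_rec (i - 2)
    have b := phi_rec (i - 1)
    rw [show i - 2 + 2 = i by ring, show i - 2 + 1 = i - 1 by ring] at a
    rw [show i - 1 + 2 = i + 1 by ring, show i - 1 + 1 = i by ring] at b
    linarith
  · rw [Wt_split _ hs, h4]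
    have := neg_phi_rec i
    linarith

lemma exists_stable (n : ℕ) : ∃ m S, SInv n m S ∧ ∀ i, S i ≤ 1 := by
  by_contra hcon
  push Not at hcon
  have : ∀ m, ∃ S, SInv n m S := by
    intro m
    induction m with
    | zero => exact ⟨_, Inv_init n⟩
    | succ m ih =>
      obtain ⟨S, hS⟩ := ih
      obtain ⟨i, hi⟩ := hcon m S hS
      exact ⟨_, Inv_step hS (i := i) ⟨by omega, rfl⟩⟩
  obtain ⟨S, hS⟩ := this (3 * n * n + 1)
  have := Inv_bound hS
  omega

lemma odd_sum_le (B : Finset ℤ) : ∀ m : ℤ, (∀ j ∈ B, j < m ∧ Odd (m - j)) →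
    ∑ j ∈ B, phi ^ j ≤ phi ^ m := by
  induction B using Finset.induction_on_max with
  | empty => intro m _; simpa using (zpow_pos phi_pos m).le
  | insert a s ha ih =>
    intro m hm
    rw [Finset.sum_insert (fun h => lt_irrefl _ (ha a h))]
    have h1 := ih (a - 1) (by
      intro j hj
      have h1 := ha j hj
      have h2 := (hm j (Finset.mem_insert_of_mem hj)).2
      have h3 := (hm a (Finset.mem_insert_self _ _)).2
      rw [Int.odd_iff] at *
      omega)
    have h2 := phi_rec (a - 1)
    rw [show a - 1 + 2 = a + 1 by ring, show a - 1 + 1 = a by ring] at h2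
    have h3 : phi ^ (a + 1) ≤ phi ^ m := by
      apply zpow_le_zpow_right₀
      · linarith [phi_gt_s1]
      · have := (hm a (Finset.mem_insert_self _ _)).1; omega
    linarith

lemma parity_sum (l : ℤ) (B : Finset ℤ) : ∀ m : ℤ, l ≤ m →
    (∀ j ∈ B, l < j ∧ j < m ∧ Odd (m - j)) →
    l + 2 * B.card ≤ m ∧ (B.card : ℤ) * l + (B.card : ℤ) ^ 2 ≤ ∑ j ∈ B, j := by
  induction B using Finset.induction_on_max with
  | empty => intro m hm _; simpa using hm
  | insert a s ha ih =>
    intro m hlm hm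
    have hns : a ∉ s := fun h => lt_irrefl _ (ha a h)
    rw [Finset.sum_insert hns, Finset.card_insert_of_notMem hns]
    have hma := hm a (Finset.mem_insert_self _ _)
    have h1 := ih (a - 1) (by omega) (by
      intro j hj
      have h1 := ha j hj
      have h2 := (hm j (Finset.mem_insert_of_mem hj))
      have h3 := hma.2.2
      rw [Int.odd_iff] at *
      omega)
    push_cast
    constructor
    · omega
    · nlinarith [h1.1, h1.2]

lemma sum_symm (l : ℤ) : ∑ j ∈ Finset.Icc (-l) l, j = 0 := by
  have : ∑ j ∈ Finset.Icc (-l) l, j = ∑ j ∈ Finset.Icc (-l) l, -j := by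
    apply Finset.sum_nbij' (fun j => -j) (fun j => -j)
    all_goals simp
    all_goals intros; omega
  rw [Finset.sum_neg_distrib] at this
  omega

lemma window_sum (l : ℤ) (hl : 0 ≤ l) (W : Finset ℤ) (hW : ∀ j ∈ W, -l ≤ j ∧ j ≤ l) :
    (W.card : ℤ) ≤ 2 * l + 1 ∧ -(l * (2 * l + 1 - W.card)) ≤ ∑ j ∈ W, j := by
  have hsub : W ⊆ Finset.Icc (-l) l := fun j hj => Finset.mem_Icc.mpr (hW j hj)
  have hc : ((Finset.Icc (-l) l).card : ℤ) = 2 * l + 1 := by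
    rw [Int.card_Icc]; omega
  constructor
  · have := Finset.card_le_card hsub
    omega
  · have h : ∑ j ∈ W, (l - j) ≤ ∑ j ∈ Finset.Icc (-l) l, (l - j) := by
      apply Finset.sum_le_sum_of_subset_of_nonneg hsub
      intro j hj _
      have := (Finset.mem_Icc.mp hj).2
      omega
    rw [Finset.sum_sub_distrib, Finset.sum_sub_distrib, sum_symm] at h
    simp only [Finset.sum_const, nsmul_eq_mul] at h
    rw [hc] at h
    linarith

lemma even_le {G : Finset ℤ} {n : ℕ} {m j : ℤ} (hm : m ∈ G) (hmax : ∀ j ∈ G, j ≤ m)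
    (hG : ∑ j ∈ G, (-phi) ^ j = n) (hj : j ∈ G) (hjm : j ≠ m) (he : ¬ Odd (m - j)) :
    phi ^ j ≤ n := by
  obtain ⟨s, hs, hsn⟩ : ∃ s : ℝ, (∀ j : ℤ, s * (-phi) ^ j =
      if Odd (m - j) then - phi ^ j else phi ^ j) ∧ s ≤ 1 := by
    rcases Int.even_or_odd m with hp | hp
    · refine ⟨1, fun j => ?_, le_rfl⟩
      rcases Int.even_or_odd j with hq | hq
      · rw [if_neg (by rw [Int.not_odd_iff_even]; exact hp.sub hq), hq.neg_zpow, one_mul]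
      · rw [if_pos (hp.sub_odd hq), hq.neg_zpow, one_mul]
    · refine ⟨-1, fun j => ?_, by norm_num⟩
      rcases Int.even_or_odd j with hq | hq
      · rw [if_pos (hp.sub_even hq), hq.neg_zpow]; ring
      · rw [if_neg (by rw [Int.not_odd_iff_even]; exact hp.sub_odd hq), hq.neg_zpow]; ring
  have h1 : s * n = ∑ j ∈ G, if Odd (m - j) then - phi ^ j else phi ^ j := by
    rw [← hG, Finset.mul_sum]
    exact Finset.sum_congr rfl fun j _ => hs j
  rw [Finset.sum_ite, Finset.sum_neg_distrib] at h1
  have h2 := odd_sum_le (G.filter fun j => Odd (m - j)) m (by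
    intro a ha
    rw [Finset.mem_filter] at ha
    refine ⟨lt_of_le_of_ne (hmax a ha.1) ?_, ha.2⟩
    rintro rfl
    simpa using ha.2)
  have h3 : ∑ a ∈ ({j, m} : Finset ℤ), phi ^ a ≤ ∑ a ∈ G.filter (fun j => ¬ Odd (m - j)), phi ^ a := by
    apply Finset.sum_le_sum_of_subset_of_nonneg
    · intro a ha
      simp only [Finset.mem_insert, Finset.mem_singleton] at ha
      rw [Finset.mem_filter]
      rcases ha with rfl | rfl
      · exact ⟨hj, he⟩
      · exact ⟨hm, by simp⟩
    · intro a _ _; exact (zpow_pos phi_pos a).le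
  rw [Finset.sum_pair hjm] at h3
  have : s * n ≤ n := by
    have : (0:ℝ) ≤ n := by positivity
    nlinarith
  linarith

lemma set_bound {G : Finset ℤ} {n : ℕ} {l : ℤ} (hl : 0 ≤ l) (hln : 2 * l + 1 < n)
    (hlphi : ∀ j : ℤ, phi ^ j ≤ n → j ≤ l) (hc : G.card = n)
    (h1 : ∑ j ∈ G, phi ^ (-j) = n) (h2 : ∑ j ∈ G, (-phi) ^ j = n) :
    ((n : ℤ) - 2 * l - 1) ^ 2 + l * ((n : ℤ) - 2 * l - 1) - 1 ≤ ∑ j ∈ G, j := by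
  have hlow : ∀ j ∈ G, -l ≤ j := by
    intro j hj
    have : phi ^ (-j) ≤ n := by
      rw [← h1]
      exact Finset.single_le_sum (f := fun j => phi ^ (-j)) (fun a _ => (zpow_pos phi_pos _).le) hj
    have := hlphi _ this
    omega
  have hne : G.Nonempty := by rw [← Finset.card_pos]; omega
  have hm := G.max'_mem hne
  have hmax : ∀ j ∈ G, j ≤ G.max' hne := fun j hj => G.le_max' j hj
  set m := G.max' hne
  have hml : l < m := by
    by_contra h
    have := (window_sum l hl G fun j hj => ⟨hlow j hj, by have := hmax j hj; omega⟩).1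
    omega
  obtain ⟨hw1, hw2⟩ := window_sum l hl ((G.erase m).filter fun j => j ≤ l) (by
    intro j hj
    simp only [Finset.mem_filter, Finset.mem_erase] at hj
    exact ⟨hlow j hj.1.2, hj.2⟩)
  obtain ⟨hp1, hp2⟩ := parity_sum l ((G.erase m).filter fun j => ¬ j ≤ l) m hml.le (by
    intro j hj
    simp only [Finset.mem_filter, Finset.mem_erase] at hj
    refine ⟨by omega, lt_of_le_of_ne (hmax j hj.1.2) hj.1.1, ?_⟩
    by_contra ho
    exact hj.2 (hlphi _ (even_le hm hmax h2 hj.1.2 hj.1.1 ho)))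
  have hs := Finset.sum_filter_add_sum_filter_not (G.erase m) (fun j => j ≤ l) (fun j => j)
  have hcs := Finset.card_filter_add_card_filter_not (s := G.erase m) (fun j => j ≤ l)
  rw [Finset.card_erase_of_mem hm, hc] at hcs
  have ht := Finset.add_sum_erase G (fun j => j) hm
  rw [← ht, ← hs]
  generalize ((G.erase m).filter fun j => j ≤ l).card = R at *
  generalize ((G.erase m).filter fun j => ¬ j ≤ l).card = o at *
  have hR : (R : ℤ) = n - 1 - o := by omega
  rw [hR] at hw1 hw2
  nlinarith

lemma sq_lt (n : ℕ) (hn : 20 ≤ n) : (n : ℝ) ^ 2 ≤ phi ^ (n - 2) := by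
  induction n, hn using Nat.le_induction with
  | base =>
    calc ((20:ℕ):ℝ)^2 ≤ 1.6 ^ 18 := by norm_num
      _ ≤ phi ^ 18 := by gcongr; exact phi_gt_s1
  | succ n hn ih =>
    rw [show n + 1 - 2 = (n - 2) + 1 by omega, pow_succ]
    have h20 : (20:ℝ) ≤ n := by exact_mod_cast hn
    calc ((n+1:ℕ):ℝ)^2 ≤ (n:ℝ)^2 * 1.6 := by push_cast; nlinarith
      _ ≤ phi ^ (n-2) * phi := by
        exact mul_le_mul ih phi_gt_s1 (by norm_num) (pow_pos phi_pos _).le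

/-- For `n ≥ 20` there is a complete Bergman game from `₀(n)` of length at least
`n² − 6n − 3n·log_φ n + 5·log_φ n + 2(log_φ n)² − 1`. -/
theorem bergman_long_game_exists (n : ℕ) (hn : 20 ≤ n) :
    ∃ (m : ℕ) (g : ℕ → BState), CompleteGame (initState n) m g ∧
      (n : ℝ) ^ 2 - 6 * n - 3 * n * logphi n + 5 * logphi n + 2 * (logphi n) ^ 2 - 1
        ≤ (m : ℝ) := by
  obtain ⟨m, S, ⟨hst, -, hc, hi, hp, hq⟩, hS⟩ := exists_stable n
  obtain ⟨k, T, hk, hT⟩ := finish n S hS hc.le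
  obtain ⟨g, hg, hgT⟩ := (hst.trans hk).game
  refine ⟨m + k, g, ⟨hg, hgT ▸ hT⟩, ?_⟩
  have key : ∀ f : ℤ → ℝ, Wt f S = ∑ j ∈ S.support.map (Equiv.neg ℤ).toEmbedding, f (-j) := by
    intro f
    rw [Finset.sum_map]
    unfold Wt Finsupp.sum
    apply Finset.sum_congr rfl
    intro i hi
    have : S i = 1 := by
      have := hS i
      have := Finsupp.mem_support_iff.mp hi
      omega
    simp [this]
  rw [key] at hc hi hp hq
  set G := S.support.map (Equiv.neg ℤ).toEmbedding
  simp only [neg_neg] at hq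
  have hcG : G.card = n := by
    simp at hc; exact_mod_cast hc
  have hphi1 : 1 < phi := by linarith [phi_gt_s1]
  have hn0 : (0:ℝ) < n := by positivity
  have hn20 : (20:ℝ) ≤ n := by exact_mod_cast hn
  set L := logphi n with hL
  have hL0 : 0 ≤ L := Real.logb_nonneg hphi1 (by linarith)
  have hLn : 2 * L ≤ n - 2 := by
    have h := Real.logb_le_logb_of_le hphi1 (by positivity) (sq_lt n hn)
    rw [Real.logb_pow, Real.logb_pow, Real.logb_self_eq_one hphi1, Nat.cast_sub (by omega)] at h
    push_cast at h
    simp only [hL, logphi]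
    linarith
  have hfl : (⌊L⌋ : ℝ) ≤ L := Int.floor_le L
  have hfl0 : 0 ≤ ⌊L⌋ := Int.floor_nonneg.mpr hL0
  have hfln : 2 * ⌊L⌋ + 1 < (n : ℤ) := by
    have : (2 * ⌊L⌋ + 1 : ℝ) < n := by linarith
    exact_mod_cast this
  have hb := set_bound hfl0 hfln (by
    intro j hj
    rw [Int.le_floor, hL, logphi, Real.le_logb_iff_rpow_le hphi1 hn0, Real.rpow_intCast]
    exact hj) hcG hp hq
  have hb' : ((n : ℝ) - 2 * ⌊L⌋ - 1) ^ 2 + ⌊L⌋ * ((n : ℝ) - 2 * ⌊L⌋ - 1) - 1 ≤ ∑ j ∈ G, (j : ℝ) := by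
    have hb2 := (Int.cast_le (R := ℝ)).mpr hb
    push_cast at hb2
    exact hb2
  have hsum : ∑ j ∈ G, (j : ℝ) = m := by
    simp only [Int.cast_neg, Finset.sum_neg_distrib] at hi
    linarith
  rw [hsum] at hb'
  have hk0 : (0:ℝ) ≤ k := by positivity
  have hl0 : (0:ℝ) ≤ ⌊L⌋ := by exact_mod_cast hfl0
  generalize (⌊L⌋ : ℝ) = l at *
  push_cast
  nlinarith [mul_nonneg (sub_nonneg.mpr hfl) (show 0 ≤ 3 * (n:ℝ) - 2 * (L + l) - 3 by linarith)]
end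
end

section
/- For every integer n ≥ 1, every state T reachable from ₀(n) by Bergman moves, and every index i with T i ≥ 1, one has (i : ℝ) ≥ −(2n + log_φ n + 2). That is, the leftmost chip can never move more than 2n + log_φ n + 2 positions to the left of index 0. -/
noncomputable section

def dd (t : ℝ) : ℝ := 1 + 27/100 * max t 0 + 3/100 * (max t 0)^2

def rho (u : ℝ) : ℝ := 1 / dd (u - phi)

def QQ (x y : ℝ) : ℝ := 1 / |x| + y * rho |x| / phi

lemma phi_lo : 1.618 < phi := by
  unfold phi
  have : (2.236:ℝ) < Real.sqrt 5 := by
    apply Real.lt_sqrt_of_sq_lt; norm_num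
  linarith

lemma phi_hi : phi < 1.61804 := by
  unfold phi
  have : Real.sqrt 5 < (2.23608:ℝ) := by
    rw [Real.sqrt_lt' (by norm_num)]; norm_num
  linarith

lemma dd_pos (t : ℝ) : 0 < dd t := by
  unfold dd; positivity

lemma dd_one (t : ℝ) : 1 ≤ dd t := by
  unfold dd
  have : 0 ≤ max t 0 := le_max_right _ _
  nlinarith [sq_nonneg (max t 0)]

lemma dd_neg {t : ℝ} (h : t ≤ 0) : dd t = 1 := by
  simp [dd, max_eq_right h]

lemma dd_nonneg {t : ℝ} (h : 0 ≤ t) : dd t = 1 + 27/100 * t + 3/100 * t^2 := by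
  simp [dd, max_eq_left h]

lemma dd_mono {s t : ℝ} (h : s ≤ t) : dd s ≤ dd t := by
  unfold dd
  have h0 : 0 ≤ max s 0 := le_max_right _ _
  have : max s 0 ≤ max t 0 := max_le_max_right _ h
  gcongr

lemma rho_pos (u : ℝ) : 0 < rho u := by
  unfold rho; have := dd_pos (u - phi); positivity

lemma rho_le_one (u : ℝ) : rho u ≤ 1 := by
  unfold rho
  rw [div_le_one (dd_pos _)]; exact dd_one _

lemma rho_one {u : ℝ} (h : u ≤ phi) : rho u = 1 := by
  unfold rho; rw [dd_neg (by linarith)]; norm_num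

lemma rho_anti {s t : ℝ} (h : s ≤ t) : rho t ≤ rho s := by
  unfold rho
  exact one_div_le_one_div_of_le (dd_pos _) (dd_mono (by linarith))

lemma mul_rho_le (u : ℝ) : u * rho u ≤ phi ^ 2 := by
  rcases le_total u phi with h | h
  · rw [rho_one h, phi_sq]; linarith
  · unfold rho
    rw [mul_one_div, div_le_iff₀ (dd_pos _), dd_nonneg (by linarith), phi_sq]
    obtain ⟨t, rfl⟩ : ∃ t, u = phi + t := ⟨u - phi, by ring⟩
    have ht : 0 ≤ t := by linarith
    have := phi_lo
    rw [add_sub_cancel_left]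
    nlinarith [sq_nonneg (t - 2), mul_nonneg ht (sub_nonneg.2 this.le),
      mul_nonneg (mul_nonneg ht ht) (sub_nonneg.2 this.le)]

lemma rho_step {u : ℝ} : rho (u - 1) ≤ phi ^ 2 * rho u := by
  unfold rho
  rw [mul_one_div, div_le_div_iff₀ (dd_pos _) (dd_pos _), phi_sq]
  have h1 := phi_lo
  rcases le_total (u - phi) 0 with h | h
  · rw [dd_neg h, dd_neg (by linarith)]; linarith
  · have h2 := dd_nonneg h
    rcases le_total (u - 1 - phi) 0 with h' | h'
    · rw [h2, dd_neg h']
      nlinarith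
    · rw [h2, dd_nonneg h']
      obtain ⟨t, ht⟩ : ∃ t, u - 1 - phi = t := ⟨_, rfl⟩
      have e : u - phi = t + 1 := by linarith
      rw [ht, e]; rw [ht] at h'
      nlinarith [mul_nonneg h' (sub_nonneg.2 h1.le),
        mul_nonneg (mul_nonneg h' h') (sub_nonneg.2 h1.le)]

lemma key_ineq {v : ℝ} (hv : phi - 1 ≤ v) :
    (v + 2) * rho v + phi / v ≤ phi ^ 2 * (1 + rho (v + 1)) := by
  have h1 := phi_lo
  have h2 := phi_hi
  have h3 := phi_sq
  have hv0 : 0 < v := by linarith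
  rcases le_total v phi with h | h
  · rw [rho_one h]
    unfold rho
    rw [dd_nonneg (by linarith)]
    obtain ⟨t, rfl⟩ : ∃ t, v = phi - 1 + t := ⟨v - (phi - 1), by ring⟩
    have ht : 0 ≤ t := by linarith
    have ht1 : t ≤ 1 := by linarith
    have e : phi - 1 + t + 1 - phi = t := by ring
    rw [e]
    have hD : 0 < 1 + 27/100 * t + 3/100 * t^2 := by positivity
    rw [← sub_nonneg]
    have : phi ^ 2 * (1 + 1 / (1 + 27/100 * t + 3/100 * t^2)) - ((phi - 1 + t + 2) * 1 + phi / (phi - 1 + t))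
      = (phi^2 * ((1 + 27/100 * t + 3/100 * t^2) + 1) * (phi - 1 + t) - ((phi - 1 + t + 2) * (phi - 1 + t) + phi) * (1 + 27/100 * t + 3/100 * t^2)) / ((1 + 27/100 * t + 3/100 * t^2) * (phi - 1 + t)) := by
      field_simp
    rw [this]
    apply div_nonneg _ (by positivity)
    have e2 : phi^2 * ((1 + 27/100 * t + 3/100 * t^2) + 1) * (phi - 1 + t) - ((phi - 1 + t + 2) * (phi - 1 + t) + phi) * (1 + 27/100 * t + 3/100 * t^2)
      = t * ((2 - 27/100*phi) - (73/100 + 3/10*phi) * t - (6/25 + 3/100*phi) * t^2 - 3/100 * t^3) := by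
      linear_combination (((1 + 27/100 * t + 3/100 * t^2) + 1) * (phi - 1 + t) + 1) * h3
    rw [e2]
    apply mul_nonneg ht
    have t2 : t^2 ≤ 1 := pow_le_one₀ ht ht1
    have t3 : t^3 ≤ 1 := pow_le_one₀ ht ht1
    have a1 := mul_le_mul_of_nonneg_left ht1 (show 0 ≤ 73/100 + 3/10*phi by linarith)
    have a2 := mul_le_mul_of_nonneg_left t2 (show 0 ≤ 6/25 + 3/100*phi by linarith)
    linarith
  · unfold rho
    rw [dd_nonneg (by linarith), dd_nonneg (by linarith)]
    obtain ⟨t, rfl⟩ : ∃ t, v = phi + t := ⟨v - phi, by ring⟩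
    have ht : 0 ≤ t := by linarith
    have e : phi + t + 1 - phi = t + 1 := by ring
    rw [e, add_sub_cancel_left]
    obtain ⟨D, hD⟩ : ∃ D, D = 1 + 27/100 * t + 3/100 * t^2 := ⟨_, rfl⟩
    obtain ⟨E, hE⟩ : ∃ E, E = 1 + 27/100 * (t + 1) + 3/100 * (t + 1)^2 := ⟨_, rfl⟩
    rw [← hD, ← hE]
    have hD0 : 0 < D := by rw [hD]; positivity
    have hE0 : 0 < E := by rw [hE]; positivity
    rw [← sub_nonneg]
    have : phi ^ 2 * (1 + 1 / E) - ((phi + t + 2) * (1 / D) + phi / (phi + t))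
      = (phi^2 * (E + 1) * D * (phi + t) - (phi + t + 2) * E * (phi + t) - phi * D * E) / (D * E * (phi + t)) := by
      field_simp
      ring
    rw [this]
    apply div_nonneg _ (by positivity)
    have e2 : phi^2 * (E + 1) * D * (phi + t) - (phi + t + 2) * E * (phi + t) - phi * D * E
      = (1 - 3/5*phi) + t * ((321/1000 - 69/1000*phi) + (-8509/10000 + 4191/10000*phi) * t
        + (-1839/10000 + 1461/10000*phi) * t^2) + (-111/10000 + 189/10000*phi) * t^4
        + (9/10000 + 9/10000*phi) * t^5 := by
      have : phi^2 * (E + 1) * D * (phi + t) - (phi + t + 2) * E * (phi + t) - phi * D * E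
        = (phi + 1) * (E + 1) * D * t + ((phi + 1) + phi) * (E + 1) * D
          - (phi + 1 + 2 * phi * t + t^2 + 2 * phi + 2 * t) * E - phi * D * E := by
        linear_combination ((E + 1) * D * (phi + t) + (E + 1) * D - E) * h3
      rw [this, hD, hE]
      ring
    rw [e2]
    have b1 : 0 ≤ 1 - 3/5*phi := by linarith
    have b2 : 0 ≤ (-111/10000 + 189/10000*phi) * t^4 := mul_nonneg (by linarith) (by positivity)
    have b3 : 0 ≤ (9/10000 + 9/10000*phi) * t^5 := mul_nonneg (by linarith) (by positivity)
    have b4 : 0 ≤ t * ((321/1000 - 69/1000*phi) + (-8509/10000 + 4191/10000*phi) * t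
        + (-1839/10000 + 1461/10000*phi) * t^2) := by
      apply mul_nonneg ht
      have c1 : (-0.173) * t ≤ (-8509/10000 + 4191/10000*phi) * t := 
        mul_le_mul_of_nonneg_right (by linarith) ht
      have c2 : (0.052) * t^2 ≤ (-1839/10000 + 1461/10000*phi) * t^2 := 
        mul_le_mul_of_nonneg_right (by linarith) (by positivity)
      nlinarith [sq_nonneg (t - 1.66)]
    linarith

/-- gap step -/
lemma QQ_gap {x y : ℝ} (hy : 0 ≤ y) : QQ (-phi * x) (y / phi) ≤ QQ x y / phi := by
  have hp := phi_pos
  unfold QQ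
  have : |(-phi * x)| = phi * |x| := by rw [abs_mul, abs_neg, abs_of_pos hp]
  rw [this]
  have h : rho (phi * |x|) ≤ rho |x| := rho_anti (by nlinarith [abs_nonneg x, phi_lo])
  have : 1 / (phi * |x|) = 1 / |x| / phi := by
    rw [div_div, mul_comm]
  rw [this, add_div]
  have : y / phi * rho (phi * |x|) / phi ≤ y / phi * rho |x| / phi := by gcongr
  have e : y / phi * rho |x| / phi = y * rho |x| / phi / phi := by ring
  linarith

lemma QQ_chip {x y : ℝ} (hy : 0 < y) (h : 1 ≤ |x| * y) (h' : 1 ≤ |x - 1| * (y + 1)) :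
    QQ (x - 1) (y + 1) ≤ phi ^ 2 * QQ x y := by
  have hp := phi_pos
  have h1 := phi_lo
  have h2 := phi_hi
  have h3 := phi_sq
  have hx : 0 < |x| := by
    by_contra hc
    have : |x| = 0 := le_antisymm (not_lt.1 hc) (abs_nonneg x)
    rw [this] at h; linarith
  have hx' : 0 < |x - 1| := by
    by_contra hc
    have : |x - 1| = 0 := le_antisymm (not_lt.1 hc) (abs_nonneg _)
    rw [this] at h'; linarith
  unfold QQ
  rcases lt_or_ge x 0 with hneg | hpos
  · have e1 : |x| = -x := abs_of_neg hneg
    have e2 : |x - 1| = |x| + 1 := by rw [e1, abs_of_neg (by linarith)]; ring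
    rw [e2]
    generalize |x| = u at hx h ⊢
    have r1 : rho (u + 1) ≤ rho u := rho_anti (by linarith)
    have r2 := mul_rho_le u
    have r0 := rho_pos u
    have i1 : 1 / (u + 1) ≤ 1 / u := one_div_le_one_div_of_le hx (by linarith)
    have i2 : (y + 1) * rho (u + 1) / phi ≤ (y + 1) * rho u / phi := by gcongr
    have i3 : rho u / phi ≤ phi / u := by
      rw [div_le_div_iff₀ hp hx]; linarith
    have i4 : 0 ≤ y * rho u / phi := by positivity
    have e3 : (y + 1) * rho u / phi = y * rho u / phi + rho u / phi := by ring
    have e4 : phi / u = phi * (1 / u) := by ring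
    rw [h3]
    nlinarith
  · rw [abs_of_nonneg hpos] at *
    rcases le_total x phi with hs | hl
    · rw [rho_one hs, rho_one (by rw [abs_le]; constructor <;> linarith)]
      have i1 : 1 / |x - 1| ≤ y + 1 := by rw [div_le_iff₀ hx']; linarith
      have i2 : 1 / x ≤ y := by rw [div_le_iff₀ hx]; linarith
      have i3 : 1 ≤ phi * (1 / x) := by rw [mul_one_div, le_div_iff₀ hx]; linarith
      have e1 : phi⁻¹ = phi - 1 := by
        field_simp; linarith
      rw [div_eq_mul_inv _ phi, div_eq_mul_inv _ phi, e1]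
      have e : phi ^ 2 * (1 / x + y * 1 * (phi - 1)) = phi^2 * (1 / x) + phi * y := by
        linear_combination (phi * y ) * h3
      rw [e, h3]
      nlinarith
    · rw [abs_of_pos (by linarith : 0 < x - 1)] at *
      have k := key_ineq (v := x - 1) (by linarith)
      have s := rho_step (u := x)
      rw [sub_add_cancel] at k
      generalize rho (x - 1) = r at k s ⊢
      generalize rho x = q at k s ⊢
      have i2 : 1 / x ≤ y := by rw [div_le_iff₀ hx]; linarith
      have m1 : 1 / x * (phi^2 * q - r) ≤ y * (phi^2 * q - r) :=
        mul_le_mul_of_nonneg_right i2 (by linarith)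
      rw [← sub_nonneg]
      have e : phi ^ 2 * (1 / x + y * q / phi) - (1 / (x - 1) + (y + 1) * r / phi)
        = (y * (phi^2 * q - r) - 1 / x * (phi^2 * q - r)) / phi
          + (phi^2 * (1 + q) - ((x - 1 + 2) * r + phi / (x - 1))) / (phi * x)
          + (phi ^ 3 - phi ^ 2 - phi) / (phi * x) := by
        have : x - 1 ≠ 0 := hx'.ne'
        field_simp
        ring
      rw [e]
      have : phi ^ 3 - phi ^ 2 - phi = 0 := by linear_combination phi * h3
      rw [this, zero_div, add_zero]
      apply add_nonneg
      · apply div_nonneg _ hp.le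
        linarith
      · apply div_nonneg _ (by positivity)
        linarith

def BInv (a b E : ℤ) : Prop :=
  0 < -((a:ℝ) + b * (1 - phi)) ∧ QQ ((a:ℝ) + b * phi) (-((a:ℝ) + b * (1 - phi))) ≤ phi ^ E

lemma phi_irr : Irrational phi := Real.goldenRatio_irrational

lemma norm_ge {a b : ℤ} (h : 0 < -((a:ℝ) + b * (1 - phi))) :
    1 ≤ |(a:ℝ) + b * phi| * (-((a:ℝ) + b * (1 - phi))) := by
  have e : ((a:ℝ) + b * phi) * ((a:ℝ) + b * (1 - phi)) = ((a^2 + a*b - b^2 : ℤ) : ℝ) := by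
    push_cast
    linear_combination (-(b:ℝ)^2) * phi_sq
  have hx : (a:ℝ) + b * phi ≠ 0 := by
    intro h0
    by_cases hb : b = 0
    · subst hb
      simp at h0 h
      rw [h0] at h; simp at h
    · apply phi_irr
      refine ⟨-a / b, ?_⟩
      have : (b:ℝ) ≠ 0 := by exact_mod_cast hb
      push_cast
      field_simp
      linarith
  have hne : (a^2 + a*b - b^2 : ℤ) ≠ 0 := by
    intro h0
    rw [h0] at e
    simp only [Int.cast_zero, mul_eq_zero] at e
    rcases e with e | e
    · exact hx e
    · rw [e] at h; simp at h
  have h1 : (1:ℤ) ≤ |a^2 + a*b - b^2| := Int.one_le_abs hne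
  have h2 : (1:ℝ) ≤ |((a^2 + a*b - b^2 : ℤ) : ℝ)| := by exact_mod_cast h1
  rw [← e, abs_mul] at h2
  rwa [← abs_of_pos h, abs_neg]

lemma BInv.chip {a b E : ℤ} (h : BInv a b E) : BInv (a - 1) b (E + 2) := by
  obtain ⟨h1, h2⟩ := h
  have e1 : (((a - 1 : ℤ) : ℝ) + b * phi) = ((a:ℝ) + b * phi) - 1 := by push_cast; ring
  have e2 : -((((a - 1 : ℤ)) : ℝ) + b * (1 - phi)) = -((a:ℝ) + b * (1 - phi)) + 1 := by
    push_cast; ring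
  have h1' : 0 < -((((a - 1 : ℤ)) : ℝ) + b * (1 - phi)) := by rw [e2]; linarith
  refine ⟨h1', ?_⟩
  have n1 := norm_ge h1
  have n2 := norm_ge h1'
  rw [e1, e2] at n2 ⊢
  refine (QQ_chip h1 n1 n2).trans ?_
  rw [zpow_add₀ phi_pos.ne', mul_comm]
  have : phi ^ (2:ℤ) = phi ^ 2 := by norm_cast
  rw [this]
  exact mul_le_mul_of_nonneg_right h2 (by positivity)

lemma BInv.chips {a b E : ℤ} (h : BInv a b E) (s : ℕ) : BInv (a - s) b (E + 2 * s) := by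
  induction s with
  | zero => simpa using h
  | succ k ih =>
    have := ih.chip
    convert this using 1 <;> push_cast <;> ring

lemma BInv.gap {a b E : ℤ} (h : BInv a b E) : BInv (-b) (-(a + b)) (E - 1) := by
  obtain ⟨h1, h2⟩ := h
  have hp := phi_pos
  have h3 := phi_sq
  have e1 : (((-b : ℤ) : ℝ) + ((-(a + b) : ℤ) : ℝ) * phi) = -phi * ((a:ℝ) + b * phi) := by
    push_cast; linear_combination (b : ℝ) * h3
  have e2 : -(((-b : ℤ) : ℝ) + ((-(a + b) : ℤ) : ℝ) * (1 - phi))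
      = -((a:ℝ) + b * (1 - phi)) / phi := by
    rw [eq_div_iff hp.ne']
    push_cast; linear_combination (-(a : ℝ) - b) * h3
  unfold BInv
  rw [e1, e2]
  refine ⟨by positivity, (QQ_gap h1.le).trans ?_⟩
  rw [zpow_sub_one₀ hp.ne', div_eq_mul_inv]
  exact mul_le_mul_of_nonneg_right h2 (by positivity)

lemma BInv_init : BInv (-1) 0 1 := by
  have h3 := phi_sq
  have := phi_lo
  have hp := phi_pos
  unfold BInv QQ
  simp only [Int.cast_neg, Int.cast_one, Int.cast_zero, zero_mul, add_zero, abs_neg, abs_one, zpow_one,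
    neg_neg, one_mul, div_one]
  rw [rho_one (by linarith)]
  refine ⟨by norm_num, ?_⟩
  have : 1 / phi = phi - 1 := by field_simp; linarith
  rw [this]; linarith

lemma BInv_seq (s : ℕ → ℕ) (h0 : 1 ≤ s 0) (k : ℕ) : ∃ a b : ℤ,
    BInv a b (2 * ((∑ l ∈ Finset.range (k + 1), s l : ℕ) : ℤ) - k - 1) ∧
    (a:ℝ) + b * phi = -∑ l ∈ Finset.range (k + 1), (s l : ℝ) * (-phi) ^ ((k:ℤ) - l) := by
  induction k with
  | zero =>
    refine ⟨-(s 0), 0, ?_, by simp⟩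
    obtain ⟨j, hj⟩ : ∃ j, s 0 = j + 1 := ⟨s 0 - 1, by omega⟩
    have := BInv_init.chips j
    simp only [zero_add, Finset.sum_range_one, hj]
    convert this using 1 <;> push_cast <;> ring
  | succ k ih =>
    obtain ⟨a, b, hI, hE⟩ := ih
    refine ⟨-b - s (k+1), -(a + b), ?_, ?_⟩
    · have := (hI.gap).chips (s (k + 1))
      rw [Finset.sum_range_succ _ (k + 1)]
      convert this using 1
      push_cast; ring
    · rw [Finset.sum_range_succ _ (k + 1)]
      have e : ∑ l ∈ Finset.range (k + 1), (s l : ℝ) * (-phi) ^ (((k + 1 : ℕ):ℤ) - l)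
        = -phi * ∑ l ∈ Finset.range (k + 1), (s l : ℝ) * (-phi) ^ ((k:ℤ) - l) := by
        rw [Finset.mul_sum]
        apply Finset.sum_congr rfl
        intro l _
        have : ((k + 1 : ℕ):ℤ) - l = 1 + ((k:ℤ) - l) := by push_cast; ring
        rw [this, zpow_add₀ (neg_ne_zero.2 phi_pos.ne'), zpow_one]
        ring
      rw [e]
      have e' : ∑ l ∈ Finset.range (k + 1), (s l : ℝ) * (-phi) ^ ((k:ℤ) - l) = -((a:ℝ) + b * phi) := by
        linarith
      rw [e']
      push_cast
      simp
      linear_combination (b : ℝ) * phi_sq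

lemma seq_lower (s : ℕ → ℕ) (h0 : 1 ≤ s 0) (k : ℕ) :
    phi ^ ((k:ℤ) + 1 - 2 * ((∑ l ∈ Finset.range (k + 1), s l : ℕ) : ℤ)) ≤
      |∑ l ∈ Finset.range (k + 1), (s l : ℝ) * (-phi) ^ ((k:ℤ) - l)| := by
  obtain ⟨a, b, ⟨h1, h2⟩, hE⟩ := BInv_seq s h0 k
  have hn := norm_ge h1
  have hp := phi_pos
  rw [← abs_neg, ← hE]
  have hx : 0 < |(a:ℝ) + b * phi| := by
    by_contra hc
    have : |(a:ℝ) + b * phi| = 0 := le_antisymm (not_lt.1 hc) (abs_nonneg _)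
    rw [this] at hn; linarith
  unfold QQ at h2
  have h4 : 0 ≤ (-((a:ℝ) + b * (1 - phi))) * rho |(a:ℝ) + b * phi| / phi :=
    div_nonneg (mul_nonneg h1.le (rho_pos _).le) hp.le
  have h5 := (le_add_of_nonneg_right h4).trans h2
  have h6 := one_div_le_one_div_of_le (by positivity) h5
  rw [one_div_one_div, one_div, ← zpow_neg] at h6
  have e : (k:ℤ) + 1 - 2 * ((∑ l ∈ Finset.range (k + 1), s l : ℕ) : ℤ)
      = -(2 * ((∑ l ∈ Finset.range (k + 1), s l : ℕ) : ℤ) - k - 1) := by ring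
  rw [e]
  exact h6

def val (S : BState) : ℝ := S.sum fun i c => (c:ℝ) * (1 - phi) ^ i

lemma val_add (S T : BState) : val (S + T) = val S + val T := by
  unfold val
  rw [Finsupp.sum_add_index']
  · simp
  · intro i c d; push_cast; ring

lemma val_single (i : ℤ) (c : ℕ) : val (Finsupp.single i c) = c * (1 - phi) ^ i := by
  unfold val; rw [Finsupp.sum_single_index]; simp

lemma psi_ne_s2 : 1 - phi ≠ 0 := by linarith [phi_lo]

lemma move_inv {S S' : BState} (h : Move S S') : val S' = val S ∧ chips S' ≤ chips S := by
  have h3 := phi_sq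
  rcases h with ⟨i, h2, rfl⟩ | ⟨i, h1, h2, rfl⟩
  · have e : S = (S - Finsupp.single i 2) + Finsupp.single i 2 := by
      rw [tsub_add_cancel_of_le]
      rwa [Finsupp.single_le_iff]
    generalize S - Finsupp.single i 2 = R at e ⊢
    subst e
    simp only [val_add, chips_add, val_single, chips_single]
    refine ⟨?_, by omega⟩
    rw [show i + 1 = (i - 2) + 3 by ring]
    nth_rw 3 [show i = (i - 2) + 2 by ring]
    rw [zpow_add₀ psi_ne_s2 (i-2) 3, zpow_add₀ psi_ne_s2 (i-2) 2]
    have a3 : (1 - phi) ^ (3:ℤ) = (1 - phi) ^ 3 := by norm_cast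
    have a2 : (1 - phi) ^ (2:ℤ) = (1 - phi) ^ 2 := by norm_cast
    rw [a3, a2]
    push_cast
    linear_combination (-(1 - phi) ^ (i-2) * phi) * h3
  · have e : S = (S - Finsupp.single i 1 - Finsupp.single (i + 1) 1) + Finsupp.single (i + 1) 1
        + Finsupp.single i 1 := by
      rw [tsub_add_cancel_of_le, tsub_add_cancel_of_le]
      · rwa [Finsupp.single_le_iff]
      · rw [Finsupp.single_le_iff]
        simpa using h2
    generalize S - Finsupp.single i 1 - Finsupp.single (i + 1) 1 = R at e ⊢
    subst e
    simp only [val_add, chips_add, val_single, chips_single]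
    refine ⟨?_, by omega⟩
    rw [zpow_add₀ psi_ne_s2 i 2, zpow_add₀ psi_ne_s2 i 1]
    have a2 : (1 - phi) ^ (2:ℤ) = (1 - phi) ^ 2 := by norm_cast
    rw [a2, zpow_one]
    push_cast
    linear_combination ((1 - phi) ^ i) * h3

lemma reach_inv {n : ℕ} {T : BState} (h : Reachable (initState n) T) :
    val T = n ∧ chips T ≤ n := by
  induction h with
  | refl => simp [initState, val_single, chips_single]
  | tail _ hm ih =>
    have := move_inv hm
    exact ⟨this.1.trans ih.1, this.2.trans ih.2⟩

lemma sum_shift (T : BState) (m : ℕ) (hm : ∀ i, T i ≠ 0 → -(m:ℤ) ≤ i) :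
    ∃ N : ℕ, ∀ (M : Type) [AddCommMonoid M] (g : ℤ → ℕ → M) (_ : ∀ i, g i 0 = 0),
      T.sum g = ∑ l ∈ Finset.range (m + N), g ((l:ℤ) - m) (T ((l:ℤ) - m)) := by
  obtain ⟨N, hN⟩ : ∃ N : ℕ, ∀ i ∈ T.support, i < N := by
    obtain ⟨B, hB⟩ := T.support.bddAbove
    refine ⟨B.toNat + 1, fun i hi => ?_⟩
    have := hB hi
    push_cast
    omega
  refine ⟨N, fun M _ g hg => ?_⟩
  have hinj : Set.InjOn (fun l : ℕ => (l:ℤ) - m) (Finset.range (m + N)) := by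
    intro a _ b _ h
    simp only at h
    omega
  rw [← Finset.sum_image (f := fun i => g i (T i)) hinj]
  unfold Finsupp.sum
  apply Finset.sum_subset
  · intro i hi
    have h1 := hN i hi
    have h2 := hm i (Finsupp.mem_support_iff.1 hi)
    simp only [Finset.mem_image, Finset.mem_range]
    exact ⟨(i + m).toNat, by omega, by omega⟩
  · intro i _ hi
    rw [Finsupp.notMem_support_iff.1 hi, hg]

lemma main_min {n : ℕ} (hn : 1 ≤ n) {T : BState} (hT : Reachable (initState n) T)
    (k : ℕ) (hk : T (-((k + 1 : ℕ):ℤ)) ≠ 0) (hm : ∀ i, T i ≠ 0 → -((k + 1 : ℕ):ℤ) ≤ i) :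
    ((k + 1 : ℕ):ℝ) ≤ 2 * (n:ℝ) + logphi n + 2 := by
  obtain ⟨hv, hc⟩ := reach_inv hT
  have hp := phi_pos
  have h1 := phi_lo
  have h2 := phi_hi
  have h3 := phi_sq
  obtain ⟨N, hN⟩ := sum_shift T (k + 1) hm
  set s : ℕ → ℕ := fun l => T ((l:ℤ) - (k + 1 : ℕ)) with hs
  have hs0 : 1 ≤ s 0 := by
    have : s 0 ≠ 0 := by simpa [hs] using hk
    omega
  unfold val at hv
  unfold chips at hc
  rw [hN _ _ (by simp), Finset.sum_range_add] at hv
  rw [hN _ _ (by simp), Finset.sum_range_add] at hc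
  have hL := seq_lower s hs0 k
  change ∑ l ∈ Finset.range (k+1), s l + ∑ l ∈ Finset.range N, s (k + 1 + l) ≤ n at hc
  set c := ∑ l ∈ Finset.range (k+1), s l
  have e1 : ∑ l ∈ Finset.range (k+1), (T ((l:ℤ) - (k + 1 : ℕ)) : ℝ) * (1 - phi) ^ ((l:ℤ) - (k + 1 : ℕ))
      = -phi * ∑ l ∈ Finset.range (k + 1), (s l : ℝ) * (-phi) ^ ((k:ℤ) - l) := by
    rw [Finset.mul_sum]
    apply Finset.sum_congr rfl
    intro l _
    have hi : 1 - phi = (-phi)⁻¹ := by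
      apply eq_inv_of_mul_eq_one_left
      linear_combination h3
    have : -((l:ℤ) - (k + 1 : ℕ)) = 1 + ((k:ℤ) - l) := by push_cast; ring
    rw [hi, inv_zpow', this, zpow_add₀ (neg_ne_zero.2 hp.ne'), zpow_one]
    ring
  have e2 : |∑ l ∈ Finset.range N, (T (((k + 1 + l : ℕ):ℤ) - (k + 1 : ℕ)) : ℝ) *
      (1 - phi) ^ (((k + 1 + l : ℕ):ℤ) - (k + 1 : ℕ))| ≤ n := by
    calc _ ≤ ∑ l ∈ Finset.range N, (s (k + 1 + l) : ℝ) := by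
          refine (Finset.abs_sum_le_sum_abs _ _).trans (Finset.sum_le_sum fun l _ => ?_)
          have : ((k + 1 + l : ℕ):ℤ) - (k + 1 : ℕ) = (l:ℕ) := by push_cast; ring
          simp only [hs, this]
          rw [zpow_natCast, abs_mul, Nat.abs_cast, abs_pow]
          have : |1 - phi| ≤ 1 := by rw [abs_le]; constructor <;> linarith
          exact mul_le_of_le_one_right (by positivity) (pow_le_one₀ (abs_nonneg _) this)
      _ ≤ n := by
          have : ∑ l ∈ Finset.range N, s (k + 1 + l) ≤ n := by omega
          exact_mod_cast this
  rw [e1] at hv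
  generalize ∑ l ∈ Finset.range N, (T (((k + 1 + l : ℕ):ℤ) - (k + 1 : ℕ)) : ℝ) *
      (1 - phi) ^ (((k + 1 + l : ℕ):ℤ) - (k + 1 : ℕ)) = B at hv e2
  generalize ∑ l ∈ Finset.range (k + 1), (s l : ℝ) * (-phi) ^ ((k:ℤ) - l) = A at hv hL
  have hn' : (1:ℝ) ≤ n := by exact_mod_cast hn
  have hA : |A| ≤ phi * n := by
    rw [abs_le] at e2 ⊢
    constructor <;> nlinarith [e2.1, e2.2]
  have hlog := Real.logb_le_logb_of_le (b := phi) (by linarith) (by positivity) (hL.trans hA)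
  rw [← Real.rpow_intCast, Real.logb_rpow hp (by linarith), Real.logb_mul hp.ne' (by linarith),
    Real.logb_self_eq_one (by linarith)] at hlog
  have hcn : (c:ℝ) ≤ n := by
    have : c ≤ n := by omega
    exact_mod_cast this
  unfold logphi
  push_cast at hlog ⊢
  linarith

/-- In any state reachable from `₀(n)`, every chip lies at an index at least
`−(2n + log_φ n + 2)`. -/
theorem bergman_leftmost_lower_bound (n : ℕ) (hn : 1 ≤ n)
    (T : BState) (hT : Reachable (initState n) T)
    (i : ℤ) (hi : 1 ≤ T i) :
    -(2 * (n : ℝ) + logphi n + 2) ≤ (i : ℝ) := by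
  have hlog : 0 ≤ logphi n :=
    Real.logb_nonneg (by linarith [phi_lo]) (by exact_mod_cast hn)
  have hn0 : (0:ℝ) ≤ n := by positivity
  rcases le_or_gt 0 i with h | h
  · have : (0:ℝ) ≤ i := by exact_mod_cast h
    linarith
  · have hmem : i ∈ T.support := Finsupp.mem_support_iff.2 (by omega)
    have hne : T.support.Nonempty := ⟨i, hmem⟩
    set μ := T.support.min' hne with hμ
    have hle : μ ≤ i := Finset.min'_le _ _ hmem
    obtain ⟨k, hk⟩ : ∃ k : ℕ, μ = -((k + 1 : ℕ):ℤ) := ⟨(-μ - 1).toNat, by omega⟩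
    have hm := main_min hn hT k
      (by rw [← hk]; exact Finsupp.mem_support_iff.1 (Finset.min'_mem _ hne))
      (by intro j hj; rw [← hk]; exact Finset.min'_le _ _ (Finsupp.mem_support_iff.2 hj))
    have : (μ:ℝ) ≤ i := by exact_mod_cast hle
    rw [hk] at this
    push_cast at this hm
    linarith
end
end

section
/- For every integer n ≥ 20, there exist a state T reachable from ₀(n) by Bergman moves and an index i with T i ≥ 1 and (i : ℝ) ≤ −(2n − 3·log_φ n − 8). That is, the leftmost chip can be forced at least 2n − 3·log_φ n − 8 positions to the left of index 0. -/
noncomputable section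

theorem bg_core (p : ℝ) (hp : p ^ 2 = p + 1) (hp1 : 1 < p) (t : ℕ → ℕ) (ht : ∀ k, t k ≤ 1)
    (L m n : ℕ) (hm1 : 1 ≤ m) (hn : (n : ℝ) < p ^ m)
    (hsum : ∑ i ∈ Finset.range (L + m), (t i : ℝ) * (1 - p) ^ i = n * (1 - p) ^ L)
    (hcnt : ∑ i ∈ Finset.range (L + m), t i = n) : 2 * n ≤ L + 3 * m + 1 := by
  have hcount : ∀ k j, ∑ i ∈ Finset.range (k + j), t i ≤ ∑ i ∈ Finset.range k, t i + j := by
    intro k j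
    induction j with
    | zero => simp
    | succ j ih =>
      rw [← add_assoc, Finset.sum_range_succ]
      have := ht (k + j)
      omega
  by_cases hmL : L + 1 < m
  · have := hcount 0 (L + m)
    simp only [zero_add, Finset.range_zero, Finset.sum_empty] at this
    omega
  push Not at hmL
  have hinv : (1 - p) * (-p) = 1 := by nlinarith
  obtain ⟨d, hd⟩ : ∃ d : ℕ → ℝ, ∀ k, d k =
      (∑ i ∈ Finset.range k, (t i : ℝ) * (1 - p) ^ i - n * (1 - p) ^ L) * (1 - p) * (-p) ^ k :=
    ⟨_, fun _ => rfl⟩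
  have hd_succ : ∀ k, d (k + 1) = t k - p * d k := by
    intro k
    rw [hd, hd, Finset.sum_range_succ]
    have h1 : (1 - p) ^ k * (1 - p) * (-p) ^ (k + 1) = 1 := by
      rw [← pow_succ, ← mul_pow, hinv, one_pow]
    have : (-p) ^ (k + 1) = (-p) ^ k * (-p) := pow_succ _ _
    linear_combination (t k : ℝ) * h1 +
      ((∑ i ∈ Finset.range k, (t i : ℝ) * (1 - p) ^ i - n * (1 - p) ^ L) * (1 - p)) * this
  have hdM : d (L + m) = 0 := by rw [hd, hsum]; ring
  have htr : ∀ k, (t k : ℝ) = 0 ∨ (t k : ℝ) = 1 := by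
    intro k
    have := ht k
    interval_cases h : t k <;> simp
  -- d in [-(p-1), 1]
  have hdb : ∀ j k, k + j = L + m → -(p - 1) ≤ d k ∧ d k ≤ 1 := by
    intro j
    induction j with
    | zero =>
      intro k hk
      rw [show k = L + m by omega, hdM]
      constructor <;> linarith
    | succ j ih =>
      intro k hk
      obtain ⟨h1, h2⟩ := ih (k + 1) (by omega)
      rw [hd_succ] at h1 h2
      rcases htr k with h | h <;> rw [h] at h1 h2 <;> constructor <;> nlinarith
  obtain ⟨e, he⟩ : ∃ e : ℕ → ℝ, ∀ k, e k = n * (1 - p) ^ (L + 1) * (-p) ^ k := ⟨_, fun _ => rfl⟩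
  have heb : ∀ k, k + m ≤ L + 1 → |e k| < 1 := by
    intro k hk
    obtain ⟨j, hj⟩ := Nat.exists_eq_add_of_le hk
    have h1 : e k = n * (1 - p) ^ m * (1 - p) ^ j := by
      rw [he, hj]
      have : (1 - p) ^ k * (-p) ^ k = 1 := by rw [← mul_pow, hinv, one_pow]
      rw [pow_add, pow_add]
      linear_combination (n : ℝ) * (1 - p) ^ m * (1 - p) ^ j * this
    have habs : |1 - p| = p - 1 := by rw [abs_of_neg] <;> linarith
    rw [h1, abs_mul, abs_mul, abs_pow, abs_pow, habs, Nat.abs_cast]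
    have h2 : p ^ m * (p - 1) ^ m = 1 := by
      rw [← mul_pow, show p * (p - 1) = 1 by nlinarith, one_pow]
    have h3 : (0 : ℝ) < (p - 1) ^ m := pow_pos (by linarith) _
    have h4 : (p - 1) ^ j ≤ 1 := pow_le_one₀ (by linarith) (by nlinarith)
    have h5 : (0 : ℝ) ≤ (p - 1) ^ j := pow_nonneg (by linarith) _
    have h6 : (n : ℝ) * (p - 1) ^ m < 1 := (mul_lt_mul_of_pos_right hn h3).trans_eq h2
    have h7 : (0 : ℝ) ≤ n * (p - 1) ^ m := by positivity
    nlinarith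
  have he_succ : ∀ k, e (k + 1) = - p * e k := by
    intro k; rw [he, he, pow_succ]; ring
  have key : ∀ k, k + m ≤ L + 1 →
      (d k + e k = 0 ∧ ∑ i ∈ Finset.range k, t i = 0) ∨
      (d k + e k = 1 ∧ 2 * ∑ i ∈ Finset.range k, t i ≤ k + 1) ∨
      (d k + e k = 1 - p ∧ 2 * ∑ i ∈ Finset.range k, t i ≤ k + 2) := by
    intro k
    induction k with
    | zero =>
      intro _
      left
      constructor
      · rw [hd, he]; simp; ring
      · simp
    | succ k ih =>
      intro hk
      have hdk := hdb (L + m - (k + 1)) (k + 1) (by omega)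
      have hek := abs_lt.1 (heb (k + 1) hk)
      have hy : d (k + 1) + e (k + 1) = t k - p * (d k + e k) := by
        rw [hd_succ, he_succ]; ring
      have htn : t k = 0 ∨ t k = 1 := by have := ht k; omega
      rw [Finset.sum_range_succ]
      rcases ih (by omega) with ⟨h1, h2⟩ | ⟨h1, h2⟩ | ⟨h1, h2⟩ <;> rw [h1] at hy <;>
        rcases htn with h | h <;> rw [h] at hy ⊢ <;> push_cast at hy
      · left; exact ⟨by rw [hy]; ring, by omega⟩
      · right; left; exact ⟨by rw [hy]; ring, by omega⟩
      · exfalso; nlinarith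
      · right; right; exact ⟨by rw [hy]; ring, by omega⟩
      · right; left; exact ⟨by rw [hy]; nlinarith, by omega⟩
      · exfalso; nlinarith
  have h1 := key (L + 1 - m) (by omega)
  have h2 := hcount (L + 1 - m) (2 * m - 1)
  rw [show L + 1 - m + (2 * m - 1) = L + m by omega, hcnt] at h2
  omega

/-- Weighted sum. -/
def bgW (f : ℤ → ℝ) (S : BState) : ℝ := S.sum fun i c => (c : ℝ) * f i

theorem bgW_add (f : ℤ → ℝ) (S T : BState) : bgW f (S + T) = bgW f S + bgW f T := by
  unfold bgW
  apply Finsupp.sum_add_index'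
  · simp
  · intros; push_cast; ring

theorem bgW_single (f : ℤ → ℝ) (i : ℤ) (c : ℕ) : bgW f (Finsupp.single i c) = c * f i := by
  unfold bgW
  apply Finsupp.sum_single_index
  simp

theorem bgW_split (f : ℤ → ℝ) (S S' : BState) (i : ℤ) (h : SplitAt S S' i) :
    bgW f S' = bgW f S - 2 * f i + f (i + 1) + f (i - 2) := by
  obtain ⟨h2, rfl⟩ := h
  have hS : S - Finsupp.single i 2 + Finsupp.single i 2 = S := by
    apply tsub_add_cancel_of_le
    simpa using h2
  have h3 := bgW_add f (S - Finsupp.single i 2) (Finsupp.single i 2)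
  rw [hS, bgW_single] at h3
  rw [bgW_add, bgW_add, bgW_single, bgW_single]
  push_cast at h3 ⊢
  linarith

theorem bgW_range (f : ℤ → ℝ) (S : BState) (L M : ℕ)
    (h : ∀ i, 1 ≤ S i → -(L : ℤ) ≤ i ∧ i < -(L : ℤ) + M) :
    bgW f S = ∑ k ∈ Finset.range M, (S (-(L : ℤ) + k) : ℝ) * f (-(L : ℤ) + k) := by
  have hinj : Set.InjOn (fun k : ℕ => -(L : ℤ) + k) (Finset.range M) := by
    intro a _ b _ hab
    simp at hab
    exact hab
  unfold bgW
  rw [Finsupp.sum_of_support_subset S (s := (Finset.range M).image fun k : ℕ => -(L : ℤ) + k)]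
  · rw [Finset.sum_image hinj]
  · intro i hi
    have := h i (Nat.one_le_iff_ne_zero.2 (Finsupp.mem_support_iff.1 hi))
    simp only [Finset.mem_image, Finset.mem_range]
    exact ⟨(i + L).toNat, by omega, by omega⟩
  · simp

theorem bg_main (p : ℝ) (hp : p ^ 2 = p + 1) (hp1 : 1 < p) (n L m : ℕ) (hm1 : 1 ≤ m)
    (hn : (n : ℝ) < p ^ m)
    (hB : ∀ S, Reachable (initState n) S → ∀ i, 1 ≤ S i → -(L : ℤ) ≤ i) :
    2 * n ≤ L + 3 * m + 1 := by
  have hp0 : p ≠ 0 := by linarith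
  have hq0 : (1 - p) ≠ 0 := by intro h; linarith
  have hzp : ∀ q : ℝ, q ≠ 0 → q ^ 2 = q + 1 → ∀ i : ℤ, q ^ (i + 1) + q ^ (i - 2) = 2 * q ^ i := by
    intro q hq hq2 i
    rw [zpow_add₀ hq, zpow_sub₀ hq, zpow_one, show q ^ (2 : ℤ) = q ^ 2 by norm_cast]
    field_simp
    rw [hq2]
    linear_combination q * hq2 + hq2
  have hmain : ∃ S, Reachable (initState n) S ∧ bgW (fun _ => 1) S = n ∧
      bgW (fun i => p ^ i) S = n ∧ bgW (fun i => (1 - p) ^ i) S = n ∧ ∀ i, S i ≤ 1 := by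
    by_contra hcon
    have hstep : ∀ k : ℕ, ∃ S, Reachable (initState n) S ∧ bgW (fun _ => 1) S = n ∧
      bgW (fun i => p ^ i) S = n ∧ bgW (fun i => (1 - p) ^ i) S = n ∧
      bgW (fun i => (i : ℝ)) S = -k := by
      intro k
      induction k with
      | zero =>
        refine ⟨initState n, Relation.ReflTransGen.refl, ?_, ?_, ?_, ?_⟩ <;>
          simp [initState, bgW_single]
      | succ k ih =>
        obtain ⟨S, h1, h2, h3, h4, h5⟩ := ih
        have : ∃ i, 2 ≤ S i := by
          by_contra h
          push Not at h
          exact hcon ⟨S, h1, h2, h3, h4, fun i => by have := h i; omega⟩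
        obtain ⟨i, hi⟩ := this
        have hs : SplitAt S (S - Finsupp.single i 2 + Finsupp.single (i + 1) 1
          + Finsupp.single (i - 2) 1) i := ⟨hi, rfl⟩
        refine ⟨_, h1.tail (Or.inl ⟨i, hs⟩), ?_, ?_, ?_, ?_⟩ <;> rw [bgW_split _ _ _ _ hs]
        · rw [h2]; ring
        · rw [h3]; linarith [hzp p hp0 hp i]
        · rw [h4]; linarith [hzp (1 - p) hq0 (by nlinarith) i]
        · rw [h5]; push_cast; ring
    obtain ⟨S, h1, h2, -, -, h5⟩ := hstep (n * L + 1)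
    have : -(L : ℝ) * bgW (fun _ => 1) S ≤ bgW (fun i => (i : ℝ)) S := by
      unfold bgW Finsupp.sum
      rw [Finset.mul_sum]
      apply Finset.sum_le_sum
      intro i hi
      have := hB S h1 i (Nat.one_le_iff_ne_zero.2 (Finsupp.mem_support_iff.1 hi))
      have h : -(L : ℝ) ≤ i := by exact_mod_cast this
      have h0 : (0 : ℝ) ≤ S i := by positivity
      nlinarith
    rw [h2, h5] at this
    push_cast at this
    nlinarith
  obtain ⟨S, h1, h2, h3, h4, h5⟩ := hmain
  have hsupp : ∀ i, 1 ≤ S i → -(L : ℤ) ≤ i ∧ i < -(L : ℤ) + (L + m : ℕ) := by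
    intro i hi
    refine ⟨hB S h1 i hi, ?_⟩
    by_contra hlt
    have hle : (m : ℤ) ≤ i := by push_cast at hlt; omega
    have ha : p ^ m ≤ p ^ i := by
      rw [← zpow_natCast]
      exact zpow_le_zpow_right₀ hp1.le hle
    have hb : (S i : ℝ) * p ^ i ≤ bgW (fun i => p ^ i) S := by
      unfold bgW Finsupp.sum
      apply Finset.single_le_sum (f := fun i => (S i : ℝ) * p ^ i)
      · intro j _
        positivity
      · rw [Finsupp.mem_support_iff]; omega
    have hc : (1 : ℝ) ≤ S i := by exact_mod_cast hi
    have hd : 0 < p ^ i := by positivity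
    nlinarith
  rw [bgW_range _ S L (L + m) hsupp] at h2 h4
  refine bg_core p hp hp1 (fun k => S (-(L : ℤ) + k)) (fun k => h5 _) L m n hm1 hn ?_ ?_
  · rw [← h4, Finset.sum_mul]
    apply Finset.sum_congr rfl
    intro k _
    rw [zpow_add₀ hq0, zpow_neg, zpow_natCast, zpow_natCast]
    field_simp
  · simp only [mul_one] at h2
    exact_mod_cast h2

/-- For `n ≥ 20` there is a state reachable from `₀(n)` with a chip at an index at most
`−(2n − 3·log_φ n − 8)`. -/
theorem bergman_leftmost_reached (n : ℕ) (hn : 20 ≤ n) :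
    ∃ (T : BState) (i : ℤ), Reachable (initState n) T ∧ 1 ≤ T i ∧
      (i : ℝ) ≤ -(2 * (n : ℝ) - 3 * logphi n - 8) := by
  by_contra hcon
  push Not at hcon
  have h5 : Real.sqrt 5 ^ 2 = 5 := Real.sq_sqrt (by norm_num)
  have h50 : 0 ≤ Real.sqrt 5 := Real.sqrt_nonneg 5
  have hp : phi ^ 2 = phi + 1 := by unfold phi; nlinarith
  have hp1 : 1 < phi := by unfold phi; nlinarith
  have hn1 : (1 : ℝ) ≤ n := by exact_mod_cast (by omega : 1 ≤ n)
  have hlog0 : 0 ≤ logphi n := Real.logb_nonneg hp1 hn1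
  have h0 := hcon (initState n) 0 Relation.ReflTransGen.refl (by simp [initState]; omega)
  push_cast at h0
  have hB0 : 0 ≤ 2 * (n : ℝ) - 3 * logphi n - 8 := by linarith
  have hc1 := Nat.ceil_lt_add_one hB0
  have hc2 := Nat.le_ceil (2 * (n : ℝ) - 3 * logphi n - 8)
  have hm1 := Nat.floor_le hlog0
  have hm2 := Nat.lt_floor_add_one (logphi n)
  have hlt : (n : ℝ) < phi ^ (⌊logphi n⌋₊ + 1) := by
    rw [← Real.rpow_natCast]
    push_cast
    exact (Real.logb_lt_iff_lt_rpow hp1 (by linarith)).1 hm2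
  have := bg_main phi hp hp1 n ⌈2 * (n : ℝ) - 3 * logphi n - 8⌉₊ (⌊logphi n⌋₊ + 1) (by omega) hlt
    (by
      intro S hS i hi
      have := hcon S i hS hi
      have h : -((⌈2 * (n : ℝ) - 3 * logphi n - 8⌉₊ : ℕ) : ℝ) ≤ (i : ℝ) := by linarith
      exact_mod_cast h)
  have h' : 2 * (n : ℝ) ≤ (⌈2 * (n : ℝ) - 3 * logphi n - 8⌉₊ : ℝ) + 3 * ((⌊logphi n⌋₊ : ℝ) + 1) + 1 := by
    exact_mod_cast this
  linarith
end
end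

section
/- Let n ≥ 1 and let T be a nonzero state reachable from ₀(n) by Bergman moves in which every entry is 0 or 1. Let i₀ be the least index with T i₀ = 1, and suppose (i₀ : ℝ) < −log_φ n − 5. Then T(i₀ + 1) = 1 and T(i₀ + 2) = 0; that is, the left edge of T has the form 110…. -/
noncomputable section

open Real in
def bV (S : BState) : ℝ := S.sum fun i c => (c : ℝ) * goldenConj ^ i

lemma bV_add (S T : BState) : bV (S + T) = bV S + bV T := by
  unfold bV
  apply Finsupp.sum_add_index'
  · intro i; simp
  · intro i a b; push_cast; ring

lemma bV_single (i : ℤ) (c : ℕ) : bV (Finsupp.single i c) = c * Real.goldenConj ^ i := by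
  unfold bV
  apply Finsupp.sum_single_index
  simp

lemma gconj_zpow (i : ℤ) (k : ℤ) :
    Real.goldenConj ^ (i + k) = Real.goldenConj ^ i * Real.goldenConj ^ k :=
  zpow_add₀ Real.goldenConj_ne_zero i k

lemma bV_move {S S' : BState} (h : Move S S') : bV S' = bV S := by
  have hq := Real.goldenConj_sq
  have hne := Real.goldenConj_ne_zero
  rcases h with ⟨i, h2, rfl⟩ | ⟨i, h1, h2, rfl⟩
  · have e : S - Finsupp.single i 2 + Finsupp.single i 2 = S := by
      apply tsub_add_cancel_of_le
      simpa using h2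
    have e2 := congrArg bV e
    rw [bV_add, bV_single] at e2
    rw [bV_add, bV_add, bV_single, bV_single, ← e2, gconj_zpow,
      show i - 2 = i + (-2) by ring, gconj_zpow]
    have : Real.goldenConj ^ (1:ℤ) + Real.goldenConj ^ (-2:ℤ) = 2 := by
      rw [zpow_one, zpow_neg]
      have : Real.goldenConj ^ (2:ℤ) = Real.goldenConj ^ 2 := by norm_cast
      have h4 : (Real.goldenConj ^ 2)⁻¹ = 2 - Real.goldenConj := by
        apply inv_eq_of_mul_eq_one_right
        rw [hq]; linear_combination -hq
      rw [this, h4]; ring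
    push_cast
    linear_combination Real.goldenConj ^ i * this
  · have e : S - Finsupp.single i 1 - Finsupp.single (i+1) 1 + Finsupp.single (i+1) 1
        + Finsupp.single i 1 = S := by
      ext j
      simp only [Finsupp.coe_add, Finsupp.coe_tsub, Pi.add_apply, Pi.sub_apply,
        Finsupp.single_apply]
      by_cases ha : i = j
      · subst ha; simp; omega
      · by_cases hb : i + 1 = j
        · subst hb; simp; omega
        · simp [ha, hb]
    have e2 := congrArg bV e
    rw [bV_add, bV_add, bV_single, bV_single] at e2
    rw [bV_add, bV_single, ← e2, gconj_zpow, gconj_zpow]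
    have : Real.goldenConj ^ (2:ℤ) = Real.goldenConj ^ 2 := by norm_cast
    rw [this, hq, zpow_one]
    push_cast
    ring

lemma bV_reach {S T : BState} (h : Reachable S T) : bV T = bV S := by
  induction h with
  | refl => rfl
  | tail _ h ih => rw [bV_move h, ih]

lemma horner_bd (N : ℕ) : ∀ t : ℕ → ℕ, (∀ k, t k ≤ 1) →
    -1 ≤ ∑ k ∈ Finset.range N, (t k : ℝ) * Real.goldenConj ^ k ∧
    ∑ k ∈ Finset.range N, (t k : ℝ) * Real.goldenConj ^ k ≤ 1 - Real.goldenConj := by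
  have hn := Real.goldenConj_neg
  have hq := Real.goldenConj_sq
  induction N with
  | zero => intro t _; simp; linarith
  | succ N ih =>
    intro t ht
    obtain ⟨h1, h2⟩ := ih (fun k => t (k+1)) (fun k => ht _)
    have e : ∑ k ∈ Finset.range (N+1), (t k : ℝ) * Real.goldenConj ^ k =
        Real.goldenConj * (∑ k ∈ Finset.range N, (t (k+1) : ℝ) * Real.goldenConj ^ k) + t 0 := by
      rw [Finset.sum_range_succ', Finset.mul_sum]
      congr 1
      · apply Finset.sum_congr rfl; intros; ring
      · simp
    rw [e]
    have h0 : (t 0 : ℝ) ≤ 1 := by exact_mod_cast ht 0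
    have h0' : (0:ℝ) ≤ t 0 := by positivity
    constructor <;> nlinarith

/-- If `T` is a nonzero 0-1 state reachable from `₀(n)` whose least occupied index `i₀`
satisfies `i₀ < −log_φ n − 5`, then the left edge of `T` has the form `110…`. -/
theorem bergman_left_edge_form (n : ℕ) (hn : 1 ≤ n)
    (T : BState) (hT : Reachable (initState n) T) (hT0 : T ≠ 0)
    (h01 : ∀ i, T i ≤ 1)
    (i₀ : ℤ) (hi₀ : T i₀ = 1) (hleast : ∀ j < i₀, T j = 0)
    (hpos : (i₀ : ℝ) < -logphi n - 5) :
    T (i₀ + 1) = 1 ∧ T (i₀ + 2) = 0 := by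
  have hn' := Real.goldenConj_neg
  have hq := Real.goldenConj_sq
  have hne := Real.goldenConj_ne_zero
  have hgt := Real.neg_one_lt_goldenConj
  have hV : bV T = n := by
    rw [bV_reach hT, initState, bV_single]; simp
  -- rewrite as a sum over a range
  obtain ⟨N, hN⟩ : ∃ N : ℕ, ∀ j ∈ T.support, j < i₀ + N := by
    obtain ⟨M, hM⟩ := T.support.bddAbove
    refine ⟨(M + 1 - i₀).toNat, fun j hj => ?_⟩
    have := hM hj
    omega
  set t : ℕ → ℕ := fun k => T (i₀ + k) with ht
  have hsum : bV T = Real.goldenConj ^ i₀ *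
      ∑ k ∈ Finset.range (N+3), (t k : ℝ) * Real.goldenConj ^ k := by
    unfold bV
    rw [Finsupp.sum_of_support_subset (s := (Finset.range (N+3)).image (fun k : ℕ => i₀ + (k:ℤ)))]
    · rw [Finset.sum_image (by intro a _ b _ h; simpa using h), Finset.mul_sum]
      apply Finset.sum_congr rfl
      intro k _
      rw [gconj_zpow, zpow_natCast]; simp only [ht]; ring
    · intro j hj
      have h1 := hN j hj
      have h2 : ¬ j < i₀ := fun h => by
        have := hleast j h
        simp [this] at hj
      simp only [Finset.mem_image, Finset.mem_range]
      exact ⟨(j - i₀).toNat, by omega, by omega⟩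
    · simp
  have e3 : ∑ k ∈ Finset.range (N+3), (t k : ℝ) * Real.goldenConj ^ k =
      1 + t 1 * Real.goldenConj + t 2 * Real.goldenConj ^ 2 + Real.goldenConj ^ 3 *
        ∑ k ∈ Finset.range N, (t (k+3) : ℝ) * Real.goldenConj ^ k := by
    rw [Finset.sum_range_succ', Finset.sum_range_succ', Finset.sum_range_succ', Finset.mul_sum]
    have h0 : t 0 = 1 := by simpa [ht] using hi₀
    have : ∀ k, (t (k + 1 + 1 + 1) : ℝ) * Real.goldenConj ^ (k + 1 + 1 + 1) =
      Real.goldenConj ^ 3 * ((t (k+3) : ℝ) * Real.goldenConj ^ k) := by intro k; ring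
    simp only [this, h0]
    push_cast
    ring
  obtain ⟨hb1, hb2⟩ := horner_bd N (fun k => t (k+3)) (fun k => h01 _)
  by_contra hcon
  have hc : t 1 = 0 ∨ (t 1 = 1 ∧ t 2 = 1) := by
    have a1 : t 1 ≤ 1 := h01 _
    have a2 : t 2 ≤ 1 := h01 _
    have b1 : t 1 = T (i₀ + 1) := by simp [ht]
    have b2 : t 2 = T (i₀ + 2) := by simp [ht]
    rw [← b1, ← b2] at hcon
    omega
  have hc3 : Real.goldenConj ^ 3 = 2 * Real.goldenConj + 1 := by
    have : Real.goldenConj ^ 3 = Real.goldenConj * Real.goldenConj ^ 2 := by ring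
    nlinarith
  have hc3n : Real.goldenConj ^ 3 < 0 := by
    have : Real.goldenConj ^ 3 = Real.goldenConj * Real.goldenConj ^ 2 := by ring
    rw [this]; exact mul_neg_of_neg_of_pos hn' (by positivity)
  have hH : Real.goldenConj ^ 2 ≤
      ∑ k ∈ Finset.range (N+3), (t k : ℝ) * Real.goldenConj ^ k := by
    rw [e3]
    have hm := mul_le_mul_of_nonpos_left hb2 hc3n.le
    have t2 : (0:ℝ) ≤ t 2 * Real.goldenConj ^ 2 := by positivity
    have hx : Real.goldenConj ^ 3 * (1 - Real.goldenConj) = -(Real.goldenConj + 1) := by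
      rw [hc3]; nlinarith
    rw [hx] at hm
    rcases hc with h | ⟨h, h'⟩
    · rw [h]; push_cast; linarith
    · rw [h, h'] at *; push_cast; linarith
  have hphi : phi = Real.goldenRatio := rfl
  have hn1 : (0:ℝ) < n := by exact_mod_cast hn
  have hg1 := Real.one_lt_goldenRatio
  have hg0 := Real.goldenRatio_pos
  have hlt : (n:ℝ) < Real.goldenRatio ^ (-i₀ - 5) := by
    have : Real.logb Real.goldenRatio n < ((-i₀ - 5 : ℤ) : ℝ) := by
      rw [logphi, hphi] at hpos; push_cast; linarith
    rw [Real.logb_lt_iff_lt_rpow hg1 hn1, Real.rpow_intCast] at this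
    exact this
  have habs : |Real.goldenConj| = Real.goldenRatio⁻¹ := by
    rw [abs_of_neg hn', Real.inv_goldenRatio]
  have key : (n:ℝ) = Real.goldenRatio ^ (-i₀) *
      ∑ k ∈ Finset.range (N+3), (t k : ℝ) * Real.goldenConj ^ k := by
    rw [hsum] at hV
    have := congrArg abs hV
    rw [abs_mul, abs_zpow, habs, abs_of_pos hn1, inv_zpow', abs_of_nonneg (le_trans (sq_nonneg _) hH)] at this
    exact this.symm
  have h2 : Real.goldenConj ^ 2 = Real.goldenRatio ^ (-2:ℤ) := by
    rw [← sq_abs, habs, ← inv_zpow', zpow_ofNat]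
  have hle : Real.goldenRatio ^ (-i₀ - 5) ≤ Real.goldenRatio ^ (-i₀) * Real.goldenRatio ^ (-2:ℤ) := by
    rw [← zpow_add₀ hg0.ne']
    exact zpow_le_zpow_right₀ hg1.le (by omega)
  have := mul_le_mul_of_nonneg_left hH (zpow_pos hg0 (-i₀)).le
  rw [h2] at this
  linarith
end
end

section
/- Let n ≥ 1 and let T be a state reachable from ₀(n) by Bergman moves in which every entry is 0 or 1 and whose total chip count ∑_i T i equals n. Let i₀ be the least index with T i₀ = 1, and suppose (i₀ : ℝ) ≤ −L for some real L ≥ log_φ n + 3, and set z = ⌊(L − log_φ n − 3)/2⌋. Then there exists an index i with T i = 1 and (i : ℝ) ≤ −n − z + log_φ n + 1. -/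
noncomputable section

lemma aux_val_move (x : ℝ) (hx0 : x ≠ 0) (hx : x ^ 2 = x + 1) (S S' : BState) (h : Move S S') :
    (S'.sum fun i c => (c : ℝ) * x ^ i) = S.sum fun i c => (c : ℝ) * x ^ i := by
  have hadd : ∀ A B : BState, ((A + B).sum fun i c => (c : ℝ) * x ^ i) =
      (A.sum fun i c => (c : ℝ) * x ^ i) + B.sum fun i c => (c : ℝ) * x ^ i := by
    intro A B
    apply Finsupp.sum_add_index'
    · intro a; simp
    · intro a b c; push_cast; ring
  have hs : ∀ (i : ℤ) (c : ℕ), ((Finsupp.single i c : BState).sum fun i c => (c : ℝ) * x ^ i)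
      = c * x ^ i := by
    intro i c; apply Finsupp.sum_single_index; simp
  rcases h with ⟨i, h1, h2⟩ | ⟨i, h1, h2, h3⟩
  · have hS : S = (S - Finsupp.single i 2) + Finsupp.single i 2 := by
      rw [tsub_add_cancel_of_le]
      simpa using h1
    generalize S - Finsupp.single i 2 = R at *
    subst h2
    subst hS
    simp only [hadd, hs]
    have e1 : x ^ (i + 1) = x ^ (i - 2) * x ^ 3 := by
      rw [← zpow_natCast, ← zpow_add₀ hx0]; congr 1; push_cast; ring
    have e2 : x ^ i = x ^ (i - 2) * x ^ 2 := by
      rw [← zpow_natCast, ← zpow_add₀ hx0]; congr 1; push_cast; ring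
    rw [e1, e2]
    have : x ^ 3 = 2 * x + 1 := by linear_combination (x + 1) * hx
    rw [this, hx]; push_cast; ring
  · have hS : S = (S - Finsupp.single i 1 - Finsupp.single (i + 1) 1)
        + (Finsupp.single i 1 + Finsupp.single (i + 1) 1) := by
      rw [tsub_tsub, tsub_add_cancel_of_le]
      intro j
      simp only [Finsupp.add_apply, Finsupp.single_apply]
      split_ifs with a b b
      · omega
      · subst a; simpa using h1
      · subst b; simpa using h2
      · simp
    generalize S - Finsupp.single i 1 - Finsupp.single (i + 1) 1 = R at *
    subst h3
    subst hS
    simp only [hadd, hs]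
    have e1 : x ^ (i + 2) = x ^ i * x ^ 2 := by
      rw [← zpow_natCast, ← zpow_add₀ hx0]; congr 1
    have e2 : x ^ (i + 1) = x ^ i * x := by
      rw [zpow_add₀ hx0, zpow_one]
    rw [e1, e2, hx]; push_cast; ring

lemma aux_val (x : ℝ) (hx0 : x ≠ 0) (hx : x ^ 2 = x + 1) (n : ℕ) (T : BState)
    (h : Reachable (initState n) T) (h01 : ∀ i, T i ≤ 1) :
    ∑ i ∈ T.support, x ^ i = n := by
  have h1 : (T.sum fun i c => (c : ℝ) * x ^ i) = n := by
    clear h01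
    induction h with
    | refl =>
      unfold initState
      rw [Finsupp.sum_single_index] <;> simp
    | tail _ hm ih => exact (aux_val_move x hx0 hx _ _ hm).trans ih
  rw [← h1, Finsupp.sum]
  apply Finset.sum_congr rfl
  intro i hi
  have h2 : T i ≠ 0 := by simpa using hi
  have h3 : T i = 1 := by have := h01 i; omega
  simp [h3]

lemma aux_neg_zpow (y : ℝ) (i : ℤ) : (-y) ^ i = (-1) ^ i * y ^ i := by
  rw [← mul_zpow]; simp

lemma aux_bound (y : ℝ) (hy : 0 < y) (hy2 : y ^ 2 = 1 - y) (N : ℕ) :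
    ∀ (a : ℤ) (B : Finset ℤ), (∀ b ∈ B, a < b ∧ b ≤ a + N) →
      -y ^ a < (-1) ^ a * ∑ b ∈ B, (-y) ^ b ∧ (-1) ^ a * ∑ b ∈ B, (-y) ^ b < y ^ (a + 1) := by
  induction N with
  | zero =>
    intro a B hB
    have : B = ∅ := by
      apply Finset.eq_empty_of_forall_notMem
      intro b hb; have := hB b hb; push_cast at this; omega
    subst this
    have := zpow_pos hy a
    have := zpow_pos hy (a + 1)
    simp; constructor <;> assumption
  | succ N ih =>
    intro a B hB
    have hI := ih (a + 1) (B.erase (a + 1)) (by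
      intro b hb
      rw [Finset.mem_erase] at hb
      have := hB b hb.2
      push_cast at this
      have := hb.1
      constructor <;> omega)
    have e2 : y ^ (a + 1 + 1) = y ^ a * (1 - y) := by
      rw [← hy2, ← zpow_natCast, ← zpow_add₀ hy.ne']; congr 1; push_cast; ring
    have e1 : y ^ (a + 1) = y ^ a * y := by
      rw [zpow_add₀ hy.ne', zpow_one]
    have hp := zpow_pos hy (a + 1)
    have s1 : (-1 : ℝ) ^ (a + 1) = - (-1) ^ a := by
      rw [zpow_add₀ (by norm_num)]; simp
    have s2 : (-1 : ℝ) ^ a * (-1) ^ a = 1 := by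
      rw [← mul_zpow]; simp
    by_cases hm : a + 1 ∈ B
    · rw [← Finset.add_sum_erase B _ hm, aux_neg_zpow y (a + 1), s1]
      rw [s1] at hI
      have : (-1 : ℝ) ^ a * (-(-1) ^ a * y ^ (a + 1) + ∑ b ∈ B.erase (a + 1), (-y) ^ b)
        = - y ^ (a + 1) - (-(-1) ^ a * ∑ b ∈ B.erase (a + 1), (-y) ^ b) := by
        linear_combination (- y ^ (a + 1)) * s2
      rw [this]
      constructor <;> nlinarith [hI.1, hI.2]
    · rw [Finset.erase_eq_of_notMem hm, s1] at hI
      have hp := zpow_pos hy a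
      constructor <;> nlinarith [hI.1, hI.2]

lemma aux_bound' (y : ℝ) (hy : 0 < y) (hy2 : y ^ 2 = 1 - y) (a : ℤ) (B : Finset ℤ)
    (h : ∀ b ∈ B, a < b) : -y ^ a < (-1) ^ a * ∑ b ∈ B, (-y) ^ b := by
  obtain ⟨M, hM⟩ := B.bddAbove
  refine (aux_bound y hy hy2 (M - a).toNat a B ?_).1
  intro b hb
  have h1 := hM (Finset.mem_coe.2 hb)
  have h2 := h b hb
  constructor <;> omega

lemma aux_gap (y : ℝ) (hy : 0 < y) (hy2 : y ^ 2 = 1 - y) (j : ℕ) :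
    ∀ (i : ℤ) (B : Finset ℤ), (∀ b ∈ B, i < b) →
      |(-y) ^ i + ∑ b ∈ B, (-y) ^ b| ≤ y ^ (i + 2 * j) →
      ∀ m : ℕ, 1 ≤ m → m ≤ j → i + 2 * m ∉ B := by
  have hy1 : y < 1 := by nlinarith
  induction j with
  | zero => intro i B _ _ m h1 h2; omega
  | succ j ih =>
    intro i B hB hV m hm1 hm2
    have hp := zpow_pos hy i
    have e1 : y ^ (i + 1) = y ^ i * y := by
      rw [zpow_add₀ hy.ne', zpow_one]
    have e2 : y ^ (i + 2) = y ^ i * (1 - y) := by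
      rw [← hy2, ← zpow_natCast, ← zpow_add₀ hy.ne']; congr 1
    have s1 : (-1 : ℝ) ^ (i + 1) = - (-1) ^ i := by
      rw [zpow_add₀ (by norm_num)]; simp
    have s3 : (-1 : ℝ) ^ (i + 2) = (-1) ^ i := by
      rw [zpow_add₀ (by norm_num)]; norm_num
    have s2 : (-1 : ℝ) ^ i * (-1) ^ i = 1 := by
      rw [← mul_zpow]; simp
    have hmono : y ^ (i + 2 * ((j + 1 : ℕ) : ℤ)) ≤ y ^ (i + 2) :=
      zpow_le_zpow_right_of_le_one₀ hy hy1.le (by push_cast; omega)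
    have habs : (-1 : ℝ) ^ i * ((-y) ^ i + ∑ b ∈ B, (-y) ^ b) ≤ y ^ (i + 2) := by
      refine le_trans (le_abs_self _) ?_
      rw [abs_mul]
      have : |(-1 : ℝ) ^ i| = 1 := by rw [abs_zpow]; simp
      rw [this, one_mul]
      exact hV.trans hmono
    rw [aux_neg_zpow y i, mul_add, ← mul_assoc, s2, one_mul] at habs
    have hm1B : i + 1 ∈ B := by
      by_contra hc
      have := aux_bound' y hy hy2 (i + 1) B (by
        intro b hb
        have := hB b hb
        have : b ≠ i + 1 := fun h => hc (h ▸ hb)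
        omega)
      have h2 := (aux_bound y hy hy2 0 0 ∅ (by simp)).1
      have h3 : (-1) ^ (i + 1) * ∑ b ∈ B, (-y) ^ b < y ^ (i + 2) := by
        obtain ⟨M, hM⟩ := B.bddAbove
        have := (aux_bound y hy hy2 (M - (i + 1)).toNat (i + 1) B (by
          intro b hb
          have h1 := hM (Finset.mem_coe.2 hb)
          have := hB b hb
          have : b ≠ i + 1 := fun h => hc (h ▸ hb)
          constructor <;> omega)).2
        rwa [add_assoc] at this
      rw [s1] at h3
      rw [e2] at *
      have : y ^ i * (2 * y - 1) < 0 := by nlinarith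
      nlinarith
    rw [← Finset.add_sum_erase B _ hm1B, aux_neg_zpow y (i + 1), s1] at habs
    have hgt : ∀ b ∈ B.erase (i + 1), i + 1 < b := by
      intro b hb
      rw [Finset.mem_erase] at hb
      have := hB b hb.2
      have := hb.1
      omega
    have hm2B : i + 2 ∉ B.erase (i + 1) := by
      intro hc
      rw [← Finset.add_sum_erase _ _ hc, aux_neg_zpow y (i + 2), s3] at habs
      have h := aux_bound' y hy hy2 (i + 2) ((B.erase (i + 1)).erase (i + 2)) (by
        intro b hb
        rw [Finset.mem_erase] at hb
        have := hgt b hb.2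
        have := hb.1
        omega)
      rw [s3] at h
      have : y ^ i + (-1 : ℝ) ^ i * (-(-1) ^ i * y ^ (i + 1) + ((-1) ^ i * y ^ (i + 2)
          + ∑ b ∈ (B.erase (i + 1)).erase (i + 2), (-y) ^ b))
        = y ^ i - y ^ (i + 1) + y ^ (i + 2)
          + (-1) ^ i * ∑ b ∈ (B.erase (i + 1)).erase (i + 2), (-y) ^ b := by
        linear_combination (- y ^ (i + 1) + y ^ (i + 2)) * s2
      rw [this] at habs
      rw [e1] at habs
      nlinarith
    have hrec := ih (i + 2) (B.erase (i + 1)) (by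
        intro b hb
        have := hgt b hb
        have : b ≠ i + 2 := fun h => hm2B (h ▸ hb)
        omega) (by
        rw [← Finset.add_sum_erase B _ hm1B] at hV
        have h1 : (-y) ^ (i + 2) = (-y) ^ i + (-y) ^ (i + 1) := by
          rw [aux_neg_zpow y (i + 2), aux_neg_zpow y i, aux_neg_zpow y (i + 1), s3, s1, e1, e2]; ring
        rw [h1, add_assoc]
        convert hV using 2
        push_cast; ring)
    rcases Nat.lt_or_ge 1 m with h | h
    · have := hrec (m - 1) (by omega) (by omega)
      have h3 : i + 2 + 2 * ((m - 1 : ℕ) : ℤ) = i + 2 * m := by omega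
      rw [h3] at this
      intro hc
      exact this (Finset.mem_erase.2 ⟨by omega, hc⟩)
    · have : m = 1 := by omega
      subst this
      intro hc
      exact hm2B (Finset.mem_erase.2 ⟨by omega, by simpa using hc⟩)

/-- If `T` is a 0-1 state reachable from `₀(n)` with chip count `n` whose least occupied
index `i₀` satisfies `i₀ ≤ −L` with `L ≥ log_φ n + 3`, and `z = ⌊(L − log_φ n − 3)/2⌋`,
then some chip of `T` lies at an index at most `−n − z + log_φ n + 1`. -/
theorem bergman_left_bound_iterate (n : ℕ) (hn : 1 ≤ n)
    (T : BState) (hT : Reachable (initState n) T)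
    (h01 : ∀ i, T i ≤ 1) (hchips : chips T = n)
    (i₀ : ℤ) (hi₀ : T i₀ = 1) (hleast : ∀ j < i₀, T j = 0)
    (L : ℝ) (hL : logphi n + 3 ≤ L) (hpos : (i₀ : ℝ) ≤ -L)
    (z : ℤ) (hz : z = ⌊(L - logphi n - 3) / 2⌋) :
    ∃ i : ℤ, T i = 1 ∧ (i : ℝ) ≤ -(n : ℝ) - z + logphi n + 1 := by
  have hphi : phi = Real.goldenRatio := rfl
  have hpp : 0 < phi := by rw [hphi]; exact Real.goldenRatio_pos
  have hp1 : 1 < phi := by rw [hphi]; exact Real.one_lt_goldenRatio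
  have hp2 : phi ^ 2 = phi + 1 := by rw [hphi]; exact Real.goldenRatio_sq
  have hnpos : (0 : ℝ) < n := by exact_mod_cast hn
  have hyp : 0 < phi⁻¹ := inv_pos.2 hpp
  have hy2 : (phi⁻¹) ^ 2 = 1 - phi⁻¹ := by
    field_simp
    linarith
  have hlog0 : 0 ≤ logphi n := Real.logb_nonneg hp1 (by exact_mod_cast hn)
  have hz1 : (z : ℝ) ≤ (L - logphi n - 3) / 2 := by rw [hz]; exact Int.floor_le _
  have hz0 : 0 ≤ z := by
    rw [hz]; apply Int.floor_nonneg.2; linarith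
  have v1 := aux_val phi hpp.ne' hp2 n T hT h01
  have v2 := aux_val (-phi⁻¹) (by simpa using hpp.ne') (by rw [neg_sq]; linarith) n T hT h01
  have hcard : T.support.card = n := by
    rw [← hchips, chips, Finsupp.sum, Finset.card_eq_sum_ones]
    apply Finset.sum_congr rfl
    intro i hi
    have h2 : T i ≠ 0 := by simpa using hi
    have := h01 i
    omega
  have hi0 : i₀ ∈ T.support := by simp [hi₀]
  have hlow : ∀ i ∈ T.support, i₀ ≤ i := by
    intro i hi
    by_contra hc
    have h2 : T i ≠ 0 := by simpa using hi
    exact h2 (hleast i (by omega))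
  have hup : ∀ i ∈ T.support, i ≤ ⌊logphi n⌋ := by
    intro i hi
    rw [Int.le_floor, logphi, Real.le_logb_iff_rpow_le hp1 hnpos, Real.rpow_intCast, ← v1]
    exact Finset.single_le_sum (f := fun i : ℤ => phi ^ i)
      (fun j _ => (zpow_pos hpp j).le) hi
  have hgap := aux_gap phi⁻¹ hyp hy2 z.toNat i₀ (T.support.erase i₀) (by
    intro b hb
    rw [Finset.mem_erase] at hb
    have := hlow b hb.2
    have := hb.1
    omega) (by
    rw [Finset.add_sum_erase _ (fun b => (-phi⁻¹) ^ b) hi0, v2, abs_of_pos hnpos, inv_zpow',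
      ← Real.rpow_intCast, ← Real.logb_le_iff_le_rpow hp1 hnpos]
    have : ((z.toNat : ℤ)) = z := by omega
    rw [this]
    push_cast
    have : Real.logb phi n = logphi n := rfl
    linarith)
  have hfl : 0 ≤ ⌊logphi n⌋ := Int.floor_nonneg.2 hlog0
  have hiz : i₀ + 2 * z ≤ 0 := by
    have : (i₀ : ℝ) + 2 * z ≤ 0 := by linarith
    exact_mod_cast this
  have hdisj : Disjoint T.support ((Finset.Icc 1 z.toNat).image fun m : ℕ => i₀ + 2 * (m : ℤ)) := by
    rw [Finset.disjoint_right]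
    intro a ha
    simp only [Finset.mem_image, Finset.mem_Icc] at ha
    obtain ⟨m, ⟨h1, h2⟩, rfl⟩ := ha
    intro hc
    exact hgap m h1 h2 (Finset.mem_erase.2 ⟨by omega, hc⟩)
  have hsub : T.support ∪ ((Finset.Icc 1 z.toNat).image fun m : ℕ => i₀ + 2 * (m : ℤ)) ⊆
      Finset.Icc i₀ ⌊logphi n⌋ := by
    intro a ha
    rw [Finset.mem_union] at ha
    rw [Finset.mem_Icc]
    rcases ha with ha | ha
    · exact ⟨hlow a ha, hup a ha⟩
    · simp only [Finset.mem_image, Finset.mem_Icc] at ha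
      obtain ⟨m, ⟨h1, h2⟩, rfl⟩ := ha
      constructor <;> omega
  have hc := Finset.card_le_card hsub
  rw [Finset.card_union_of_disjoint hdisj, hcard, Finset.card_image_of_injective _ (by
    intro a b h
    simp only at h
    omega), Nat.card_Icc, Int.card_Icc] at hc
  have hfin : i₀ ≤ ⌊logphi n⌋ + 1 - n - z := by omega
  refine ⟨i₀, hi₀, ?_⟩
  have h1 : (i₀ : ℝ) ≤ (⌊logphi n⌋ : ℝ) + 1 - n - z := by exact_mod_cast hfin
  have h2 := Int.floor_le (logphi (n : ℝ))
  linarith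
end
end

section
/- For every integer n ≥ 20 there exists a state T, reachable from ₀(n) by split moves only and in which no split is legal (every entry of T is 0 or 1), with the following property: writing i₀ for the least index with T i₀ = 1, one has T(i₀ + 1) = 1, and for every integer j with 1 ≤ j and (j : ℝ) ≤ n − 2·log_φ n − 7 one has T(i₀ + 2j − 1) = 1 and T(i₀ + 2j) = 0, with (i₀ + 2j : ℝ) < −log_φ n − 3 for each such j. That is, after all splits are exhausted the left edge has the form 1101…10 with at least n − 2·log_φ n − 7 zeros, each left of index −log_φ n − 3. -/
noncomputable section

open Real

/-- weighted chip sum -/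
def FF (f : ℤ → ℝ) (S : BState) : ℝ := S.sum fun i c => (c : ℝ) * f i

lemma FF_add (f : ℤ → ℝ) (S T : BState) : FF f (S + T) = FF f S + FF f T := by
  unfold FF
  exact Finsupp.sum_add_index' (by simp) (by intros; push_cast; ring)

lemma FF_single (f : ℤ → ℝ) (i : ℤ) (c : ℕ) : FF f (Finsupp.single i c) = c * f i := by
  unfold FF
  exact Finsupp.sum_single_index (by simp)

lemma FF_split (f : ℤ → ℝ) {S S' : BState} {i : ℤ} (h : SplitAt S S' i) :
    FF f S' = FF f S - 2 * f i + f (i + 1) + f (i - 2) := by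
  obtain ⟨h2, rfl⟩ := h
  have : S = (S - Finsupp.single i 2) + Finsupp.single i 2 := by
    rw [tsub_add_cancel_of_le]
    rwa [Finsupp.single_le_iff]
  have h3 := congrArg (FF f) this
  simp only [FF_add, FF_single] at h3 ⊢
  push_cast at h3 ⊢
  linarith

lemma FF_mono {f g : ℤ → ℝ} {S : BState} (h : ∀ i, 1 ≤ S i → f i ≤ g i) : FF f S ≤ FF g S := by
  unfold FF
  apply Finset.sum_le_sum
  intro i hi
  have : 1 ≤ S i := Nat.one_le_iff_ne_zero.2 (Finsupp.mem_support_iff.1 hi)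
  exact mul_le_mul_of_nonneg_left (h i this) (by positivity)

lemma FF_smul (f : ℤ → ℝ) (c : ℝ) (S : BState) : FF (fun i => c * f i) S = c * FF f S := by
  unfold FF Finsupp.sum
  rw [Finset.mul_sum]
  exact Finset.sum_congr rfl fun i _ => by ring

lemma FF_nonneg {f : ℤ → ℝ} {S : BState} (h : ∀ i, 0 ≤ f i) : 0 ≤ FF f S :=
  Finset.sum_nonneg fun i _ => mul_nonneg (by positivity) (h i)

lemma FF_term_le {f : ℤ → ℝ} {S : BState} (h : ∀ i, 0 ≤ f i) (i : ℤ) (hi : 1 ≤ S i) :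
    f i ≤ FF f S := by
  have : (S i : ℝ) * f i ≤ FF f S := by
    unfold FF
    exact Finset.single_le_sum (f := fun i => (S i : ℝ) * f i)
      (fun i _ => mul_nonneg (by positivity) (h i)) (Finsupp.mem_support_iff.2 (by omega))
  have h1 : (1 : ℝ) ≤ S i := by exact_mod_cast hi
  nlinarith [h i]

lemma FF_const (c : ℝ) (S : BState) : FF (fun _ => c) S = c * FF (fun _ => 1) S := by
  rw [← FF_smul]; simp

/-- left part -/
def lo (s : ℤ) (S : BState) : BState := S.filter (· ≤ s)
/-- right part -/
def hi (s : ℤ) (S : BState) : BState := S.filter (fun i => ¬ (i ≤ s))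

lemma lo_add_hi (s : ℤ) (S : BState) : lo s S + hi s S = S :=
  Finsupp.filter_add_filter_not S _

lemma lo_apply (s : ℤ) (S : BState) (i : ℤ) : lo s S i = if i ≤ s then S i else 0 := by
  unfold lo; exact Finsupp.filter_apply _ _ _

lemma hi_apply (s : ℤ) (S : BState) (i : ℤ) : hi s S i = if i ≤ s then 0 else S i := by
  unfold hi; rw [Finsupp.filter_apply]; split_ifs <;> simp_all

lemma FF_lo_hi (f : ℤ → ℝ) (s : ℤ) (S : BState) : FF f S = FF f (lo s S) + FF f (hi s S) := by
  rw [← FF_add, lo_add_hi]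

lemma lo_step (s : ℤ) (S : BState) : lo s S = lo (s - 1) S + Finsupp.single s (S s) := by
  ext i
  rw [Finsupp.add_apply, lo_apply, lo_apply, Finsupp.single_apply]
  split_ifs <;> first | omega | (subst_vars; simp)

lemma hi_step (s : ℤ) (S : BState) : hi (s - 1) S = hi s S + Finsupp.single s (S s) := by
  ext i
  rw [Finsupp.add_apply, hi_apply, hi_apply, Finsupp.single_apply]
  split_ifs <;> first | omega | (subst_vars; simp)

lemma FF_lo_step (f : ℤ → ℝ) (s : ℤ) (S : BState) :
    FF f (lo s S) = FF f (lo (s - 1) S) + S s * f s := by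
  rw [lo_step, FF_add, FF_single]

lemma FF_hi_step (f : ℤ → ℝ) (s : ℤ) (S : BState) :
    FF f (hi (s - 1) S) = FF f (hi s S) + S s * f s := by
  rw [hi_step, FF_add, FF_single]

/-! golden facts -/

lemma gr_pos : 0 < goldenRatio := goldenRatio_pos
lemma gr_one : 1 < goldenRatio := one_lt_goldenRatio
lemma gc_eq : goldenConj = 1 - goldenRatio := by
  have := goldenRatio_add_goldenConj; linarith
lemma gr_sq : goldenRatio * goldenRatio = goldenRatio + 1 := by
  have := goldenRatio_sq; nlinarith
lemma gr_lo : 1.618 < goldenRatio := by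
  nlinarith [gr_sq, gr_pos]
lemma gr_hi : goldenRatio < 1.6181 := by
  nlinarith [gr_sq, gr_pos]
lemma gc_sq : goldenConj * goldenConj = goldenConj + 1 := by
  rw [gc_eq]; nlinarith [gr_sq]
lemma gc_ne : goldenConj ≠ 0 := goldenConj_ne_zero
lemma gr_inv : goldenRatio⁻¹ = goldenRatio - 1 := by
  rw [inv_eq_iff_eq_inv, eq_comm]
  apply inv_eq_of_mul_eq_one_left; nlinarith [gr_sq]
lemma gc_inv : goldenConj⁻¹ = goldenConj - 1 := by
  rw [inv_eq_iff_eq_inv, eq_comm]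
  apply inv_eq_of_mul_eq_one_left; nlinarith [gc_sq]
lemma gc_abs : |goldenConj| = goldenRatio⁻¹ := by
  rw [gr_inv, abs_of_neg goldenConj_neg, gc_eq]; ring

lemma gr_split (i : ℤ) : goldenRatio ^ (i + 1) + goldenRatio ^ (i - 2) = 2 * goldenRatio ^ i := by
  rw [zpow_add₀ gr_pos.ne', zpow_sub₀ gr_pos.ne', div_eq_mul_inv, zpow_one, ← inv_zpow, gr_inv]
  have : (goldenRatio - 1) ^ (2 : ℤ) = 2 - goldenRatio := by
    rw [zpow_ofNat]; nlinarith [gr_sq]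
  rw [this]; ring

lemma gc_split (i : ℤ) : goldenConj ^ (i + 1) + goldenConj ^ (i - 2) = 2 * goldenConj ^ i := by
  rw [zpow_add₀ gc_ne, zpow_sub₀ gc_ne, div_eq_mul_inv, zpow_one, ← inv_zpow, gc_inv]
  have : (goldenConj - 1) ^ (2 : ℤ) = 2 - goldenConj := by
    rw [zpow_ofNat]; nlinarith [gc_sq]
  rw [this]; ring

/-- conjugate pairs -/
def ZP (x y : ℝ) : Prop := ∃ a b : ℤ, x = a + b * goldenRatio ∧ y = a + b * goldenConj

lemma ZP.add {x y z w : ℝ} (h : ZP x y) (h' : ZP z w) : ZP (x + z) (y + w) := by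
  obtain ⟨a, b, rfl, rfl⟩ := h
  obtain ⟨c, d, rfl, rfl⟩ := h'
  exact ⟨a + c, b + d, by push_cast; ring, by push_cast; ring⟩

lemma ZP.mul {x y z w : ℝ} (h : ZP x y) (h' : ZP z w) : ZP (x * z) (y * w) := by
  obtain ⟨a, b, rfl, rfl⟩ := h
  obtain ⟨c, d, rfl, rfl⟩ := h'
  refine ⟨a * c + b * d, a * d + b * c + b * d, ?_, ?_⟩
  · push_cast; linear_combination (b * d : ℝ) * gr_sq
  · push_cast; linear_combination (b * d : ℝ) * gc_sq

lemma ZP.nat (c : ℕ) : ZP c c := ⟨c, 0, by simp, by simp⟩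

lemma ZP.zpow (k : ℤ) : ZP (goldenRatio ^ k) (goldenConj ^ k) := by
  have key : ∀ (x y : ℝ), ZP x y → ∀ m : ℕ, ZP (x ^ m) (y ^ m) := by
    intro x y h m
    induction m with
    | zero => simpa using ZP.nat 1
    | succ m ih => rw [pow_succ, pow_succ]; exact ih.mul h
  obtain ⟨m, rfl | rfl⟩ := k.eq_nat_or_neg
  · simpa using key _ _ ⟨0, 1, by simp, by simp⟩ m
  · rw [zpow_neg, zpow_neg, ← inv_zpow, ← inv_zpow, gr_inv, gc_inv]
    simpa using key _ _ ⟨-1, 1, by push_cast; ring, by push_cast; ring⟩ m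

lemma ZP.FF (s : ℤ) (S : BState) :
    ZP (FF (fun i => goldenRatio ^ (i - s)) S) (FF (fun i => goldenConj ^ (i - s)) S) := by
  induction S using Finsupp.induction_linear with
  | zero => simpa [_root_.FF] using ZP.nat 0
  | add f g hf hg => rw [FF_add, FF_add]; exact hf.add hg
  | single a b => rw [FF_single, FF_single]; exact (ZP.nat b).mul (ZP.zpow _)

lemma ZP.eq_zero {x y : ℝ} (h : ZP x y) (h1 : |x * y| < 1) : x = 0 := by
  obtain ⟨a, b, rfl, rfl⟩ := h
  have e : ((a : ℝ) + b * goldenRatio) * (a + b * goldenConj)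
      = ((a * a + a * b - b * b : ℤ) : ℝ) := by
    rw [gc_eq]; push_cast; linear_combination (-(b * b) : ℝ) * gr_sq
  rw [e, ← Int.cast_abs] at h1
  have h2 : a * a + a * b - b * b = 0 := by
    rw [← Int.abs_lt_one_iff]; exact_mod_cast h1
  rw [h2] at e
  have hb : b = 0 := by
    by_contra hb
    have hb' : (b : ℝ) ≠ 0 := by exact_mod_cast hb
    rcases mul_eq_zero.1 (e.trans (by simp)) with h | h
    · apply goldenRatio_irrational
      refine ⟨-a / b, ?_⟩
      push_cast; rw [div_eq_iff hb']; linarith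
    · apply goldenConj_irrational
      refine ⟨-a / b, ?_⟩
      push_cast; rw [div_eq_iff hb']; linarith
  subst hb
  have : a = 0 := by nlinarith
  simp [this]

/-- invariants -/
structure BInv_s7 (n : ℕ) (S : BState) : Prop where
  cnt : FF (fun _ => 1) S = n
  val : FF (fun i => goldenRatio ^ i) S = n
  con : FF (fun i => goldenConj ^ i) S = n

lemma BInv_s7.init (n : ℕ) : BInv_s7 n (initState n) := by
  constructor <;> simp [initState, FF_single]

lemma BInv_s7.split {n : ℕ} {S S' : BState} {i : ℤ} (h : BInv_s7 n S) (hs : SplitAt S S' i) :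
    BInv_s7 n S' := by
  constructor
  · rw [FF_split _ hs, h.cnt]; ring
  · rw [FF_split _ hs, h.val]; linarith [gr_split i]
  · rw [FF_split _ hs, h.con]; linarith [gc_split i]

lemma FF_shift {x : ℝ} (hx : x ≠ 0) (s : ℤ) (S : BState) :
    FF (fun i => x ^ (i - s)) S = x ^ (-s) * FF (fun i => x ^ i) S := by
  rw [← FF_smul]
  congr 1; ext i
  rw [← zpow_add₀ hx]; congr 1; ring

lemma lo_cnt_nat (S : BState) : ∃ c : ℕ, FF (fun _ => 1) S = c := by
  refine ⟨S.sum fun _ c => c, ?_⟩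
  simp [FF, Finsupp.sum]

lemma FF_one_eq_zero {S : BState} (h : FF (fun _ => 1) S = 0) (i : ℤ) : S i = 0 := by
  by_contra h'
  have := FF_term_le (f := fun _ => 1) (S := S) (by simp) i (by omega)
  linarith

lemma gap {n : ℕ} {S : BState} (h : BInv_s7 n S) (G : ℕ) (hG : 2 * (n : ℝ) ^ 2 < goldenRatio ^ G)
    (s : ℤ) (hs : s ≤ 0) (hgap : ∀ i, s - G < i → i ≤ s → S i = 0) (i : ℤ) (his : i ≤ s) :
    S i = 0 := by
  have hB : FF (fun i => goldenRatio ^ (i - s)) (lo s S) ≤ (goldenRatio ^ G)⁻¹ * n := by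
    calc _ ≤ FF (fun i => (goldenRatio ^ G)⁻¹) (lo s S) := by
            apply FF_mono
            intro i hi
            rw [lo_apply] at hi
            split_ifs at hi with h1
            · have : i ≤ s - G := by
                by_contra hc
                have := hgap i (by omega) h1
                omega
              rw [← zpow_natCast, ← zpow_neg]
              exact zpow_le_zpow_right₀ gr_one.le (by omega)
            · omega
      _ = (goldenRatio ^ G)⁻¹ * FF (fun _ => 1) (lo s S) := FF_const _ _
      _ ≤ _ := by
        have := FF_lo_hi (fun _ => 1) s S
        rw [h.cnt] at this
        have h2 : 0 ≤ FF (fun _ => 1) (hi s S) := FF_nonneg (by simp)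
        have : 0 < (goldenRatio ^ G)⁻¹ := inv_pos.2 (pow_pos gr_pos _)
        apply mul_le_mul_of_nonneg_left _ this.le
        linarith
  have hB0 : 0 ≤ FF (fun i => goldenRatio ^ (i - s)) (lo s S) :=
    FF_nonneg fun i => (zpow_pos gr_pos _).le
  have habs : ∀ k : ℤ, 0 ≤ k → |goldenConj ^ k| ≤ 1 := by
    intro k hk
    rw [abs_zpow, gc_abs, inv_zpow, ← zpow_neg]
    exact zpow_le_one_of_nonpos₀ gr_one.le (by omega)
  have hR : |FF (fun i => goldenConj ^ (i - s)) (hi s S)| ≤ n := by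
    have h0 : FF (fun _ => 1) (hi s S) ≤ n := by
      have := FF_lo_hi (fun _ => 1) s S
      rw [h.cnt] at this
      have h2 : 0 ≤ FF (fun _ => 1) (lo s S) := FF_nonneg (by simp)
      linarith
    have hab : ∀ i, 1 ≤ hi s S i → |goldenConj ^ (i - s)| ≤ 1 := by
      intro i hi
      rw [hi_apply] at hi
      split_ifs at hi
      · omega
      · exact habs _ (by omega)
    rw [abs_le]
    constructor
    · have : FF (fun _ => -1) (hi s S) ≤ FF (fun i => goldenConj ^ (i - s)) (hi s S) :=
        FF_mono fun i hi => (abs_le.1 (hab i hi)).1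
      rw [FF_const] at this; linarith
    · have : FF (fun i => goldenConj ^ (i - s)) (hi s S) ≤ FF (fun _ => 1) (hi s S) :=
        FF_mono fun i hi => (abs_le.1 (hab i hi)).2
      linarith
  have hB' : |FF (fun i => goldenConj ^ (i - s)) (lo s S)| ≤ 2 * n := by
    have e1 := FF_lo_hi (fun i => goldenConj ^ (i - s)) s S
    rw [FF_shift gc_ne, h.con] at e1
    have : FF (fun i => goldenConj ^ (i - s)) (lo s S)
      = goldenConj ^ (-s) * n - FF (fun i => goldenConj ^ (i - s)) (hi s S) := by linarith
    rw [this]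
    have h1 : |goldenConj ^ (-s) * n| ≤ n := by
      rw [abs_mul, Nat.abs_cast]
      have := habs (-s) (by omega)
      have hn : (0 : ℝ) ≤ n := by positivity
      nlinarith
    rw [abs_le] at h1 hR ⊢
    constructor <;> linarith [h1.1, h1.2, hR.1, hR.2]
  have hz := (ZP.FF s (lo s S)).eq_zero (by
    rw [abs_mul, abs_of_nonneg hB0]
    have hp : 0 < goldenRatio ^ G := pow_pos gr_pos _
    calc _ ≤ ((goldenRatio ^ G)⁻¹ * n) * (2 * n) := by gcongr
      _ = (goldenRatio ^ G)⁻¹ * (2 * (n : ℝ) ^ 2) := by ring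
      _ < (goldenRatio ^ G)⁻¹ * goldenRatio ^ G := by gcongr
      _ = 1 := inv_mul_cancel₀ hp.ne')
  by_contra hne
  have h1 : 1 ≤ lo s S i := by rw [lo_apply, if_pos his]; omega
  have := FF_term_le (f := fun i => goldenRatio ^ (i - s)) (fun i => (zpow_pos gr_pos _).le) i h1
  have h3 : 0 < goldenRatio ^ (i - s) := zpow_pos gr_pos _
  linarith

lemma FF_lo_mono (S : BState) {s t : ℤ} (i : ℤ) (hi1 : s < i) (hi2 : i ≤ t)
    (hi : 1 ≤ S i) : FF (fun _ => 1) (lo s S) + 1 ≤ FF (fun _ => 1) (lo t S) := by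
  have e : lo s (lo t S) = lo s S := by
    ext j
    rw [lo_apply, lo_apply, lo_apply]
    split_ifs <;> first | rfl | omega
  rw [FF_lo_hi _ s (lo t S), e]
  have := FF_term_le (f := fun _ => 1) (S := _root_.hi s (lo t S)) (by simp) i (by
    rw [hi_apply, lo_apply, if_neg (by omega), if_pos hi2]; exact hi)
  linarith

lemma left_bound (n : ℕ) : ∃ K : ℕ, ∀ S, BInv_s7 n S → ∀ i, 1 ≤ S i → -(K : ℤ) ≤ i := by
  obtain ⟨G, hG⟩ := pow_unbounded_of_one_lt (2 * (n : ℝ) ^ 2) gr_one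
  refine ⟨n * G, fun S h i hi => ?_⟩
  by_contra hc
  push Not at hc
  have key : ∀ k : ℕ, k ≤ n →
      FF (fun _ => 1) (lo (-((k * G : ℕ) : ℤ)) S) + k ≤ n := by
    intro k
    induction k with
    | zero =>
      intro _
      have := FF_lo_hi (fun _ => 1) (-((0 * G : ℕ) : ℤ)) S
      rw [h.cnt] at this
      have h2 : 0 ≤ FF (fun _ => 1) (_root_.hi (-((0 * G : ℕ) : ℤ)) S) := FF_nonneg (by simp)
      push_cast at *
      linarith
    | succ k ih =>
      intro hk
      have ih := ih (by omega)
      have hkn : k * G ≤ n * G := Nat.mul_le_mul_right _ (by omega)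
      have hex : ∃ j, -((k * G : ℕ) : ℤ) - G < j ∧ j ≤ -((k * G : ℕ) : ℤ) ∧ 1 ≤ S j := by
        by_contra hno
        push Not at hno
        have := gap h G hG (-((k * G : ℕ) : ℤ)) (by omega)
          (fun j h1 h2 => by have := hno j h1 h2; omega) i (by omega)
        omega
      obtain ⟨j, hj1, hj2, hj3⟩ := hex
      have := FF_lo_mono S (s := -(((k + 1) * G : ℕ) : ℤ)) (t := -((k * G : ℕ) : ℤ))
        j (by push_cast at *; linarith) hj2 hj3
      push_cast at *
      linarith
  have := key n le_rfl
  have h1 := FF_term_le (f := fun _ => 1) (S := lo (-((n * G : ℕ) : ℤ)) S) (by simp) i (by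
    rw [lo_apply, if_pos (by omega)]; exact hi)
  linarith

lemma stabilize (n : ℕ) : ∃ T, SplitReachable (initState n) T ∧ (∀ i, T i ≤ 1) ∧ BInv_s7 n T := by
  obtain ⟨K, hK⟩ := left_bound n
  have key : ∀ t : ℕ, ∀ S, BInv_s7 n S → FF (fun i => (i : ℝ)) S < t - K * n →
      ∃ T, SplitReachable S T ∧ (∀ i, T i ≤ 1) ∧ BInv_s7 n T := by
    intro t
    induction t with
    | zero =>
      intro S h hlt
      exfalso
      have : FF (fun _ => -(K : ℝ)) S ≤ FF (fun i => (i : ℝ)) S :=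
        FF_mono fun i hi => by exact_mod_cast hK S h i hi
      rw [FF_const, h.cnt] at this
      push_cast at hlt
      linarith
    | succ t ih =>
      intro S h hlt
      by_cases hst : ∀ i, S i ≤ 1
      · exact ⟨S, Relation.ReflTransGen.refl, hst, h⟩
      · push Not at hst
        obtain ⟨i, hi⟩ := hst
        have hs : SplitAt S _ i := ⟨hi, rfl⟩
        obtain ⟨T, h1, h2⟩ := ih _ (h.split hs) (by
          rw [FF_split _ hs]; push_cast at *; linarith)
        exact ⟨T, Relation.ReflTransGen.head ⟨i, hs⟩ h1, h2⟩
  obtain ⟨t, ht⟩ := exists_nat_gt (FF (fun i => (i : ℝ)) (initState n) + K * n)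
  exact key t _ (BInv_s7.init n) (by linarith)

lemma lo_FF_lt {T : BState} (hT : ∀ i, T i ≤ 1) (s : ℤ) :
    FF (fun i => goldenRatio ^ i) (lo s T) < goldenRatio ^ (s + 2) := by
  have key : ∀ k : ℕ, ∀ s : ℤ, (∀ i ≤ s - k, T i = 0) →
      FF (fun i => goldenRatio ^ i) (lo s T) < goldenRatio ^ (s + 2) := by
    intro k
    induction k with
    | zero =>
      intro s h
      have : lo s T = 0 := by
        ext i; rw [lo_apply]; split_ifs with h1
        · exact h i (by simpa using h1)
        · rfl
      rw [this]
      simpa [FF] using zpow_pos gr_pos (s + 2)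
    | succ k ih =>
      intro s h
      have := ih (s - 1) (fun i hi => h i (by push_cast; omega))
      rw [FF_lo_step]
      have h1 : (T s : ℝ) ≤ 1 := by exact_mod_cast hT s
      have e1 : goldenRatio ^ (s + 2) = goldenRatio ^ s * (goldenRatio + 1) := by
        rw [zpow_add₀ gr_pos.ne', zpow_ofNat, goldenRatio_sq]
      have e2 : goldenRatio ^ (s - 1 + 2) = goldenRatio ^ s * goldenRatio := by
        rw [show s - 1 + 2 = s + 1 by ring, zpow_add₀ gr_pos.ne', zpow_one]
      have h0 := zpow_pos gr_pos s
      rw [e1]; rw [e2] at this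
      nlinarith
  obtain ⟨b, hb⟩ := T.support.bddBelow
  apply key (s - b + 1).toNat s
  intro i hi
  by_contra hne
  have := hb (Finset.mem_coe.2 (Finsupp.mem_support_iff.2 hne))
  omega

lemma hi_FF_bd {T : BState} (hT : ∀ i, T i ≤ 1) (s : ℤ) :
    -1 ≤ FF (fun i => goldenConj ^ (i - s)) (hi s T) ∧
    FF (fun i => goldenConj ^ (i - s)) (hi s T) ≤ goldenRatio - 1 := by
  have key : ∀ k : ℕ, ∀ s : ℤ, (∀ i > s + k, T i = 0) →
      -1 ≤ FF (fun i => goldenConj ^ (i - s)) (hi s T) ∧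
      FF (fun i => goldenConj ^ (i - s)) (hi s T) ≤ goldenRatio - 1 := by
    intro k
    induction k with
    | zero =>
      intro s h
      have : hi s T = 0 := by
        ext i; rw [hi_apply]; split_ifs with h1
        · rfl
        · exact h i (by push_cast; omega)
      rw [this]
      have := gr_one
      simp [FF]; linarith
    | succ k ih =>
      intro s h
      have := ih (s + 1) (fun i hi => h i (by push_cast; omega))
      have e := FF_hi_step (fun i => goldenConj ^ (i - s)) (s + 1) T
      have e2 : (fun i : ℤ => goldenConj ^ (i - s))
          = fun i => goldenConj * goldenConj ^ (i - (s + 1)) := by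
        ext i
        rw [show i - s = 1 + (i - (s + 1)) by ring, zpow_add₀ gc_ne, zpow_one]
      rw [show s + 1 - 1 = s by ring] at e
      rw [e, e2, FF_smul]
      rw [show s + 1 - s = 1 by ring, zpow_one]
      have h1 : (T (s + 1) : ℝ) ≤ 1 := by exact_mod_cast hT _
      have h0 : (0 : ℝ) ≤ T (s + 1) := by positivity
      rw [gc_eq] at *
      set R := FF (fun i => (1 - goldenRatio) ^ (i - (s + 1))) (hi (s + 1) T)
      set t := (T (s + 1) : ℝ)
      have := gr_one
      have := gr_sq
      constructor <;> nlinarith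
  obtain ⟨b, hb⟩ := T.support.bddAbove
  apply key (b - s).toNat s
  intro i hi
  by_contra hne
  have := hb (Finset.mem_coe.2 (Finsupp.mem_support_iff.2 hne))
  omega

lemma lo_eq_zero {T : BState} {s : ℤ} (h : FF (fun i => goldenRatio ^ i) (lo s T) = 0) :
    lo s T = 0 := by
  ext i
  by_contra hne
  have := FF_term_le (f := fun i => goldenRatio ^ i) (S := lo s T)
    (fun i => (zpow_pos gr_pos _).le) i (by simp at hne; omega)
  have h3 : 0 < goldenRatio ^ i := zpow_pos gr_pos _
  linarith

lemma step_phi {T : BState} (hT : ∀ i, T i ≤ 1) (s : ℤ)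
    (h : FF (fun i => goldenRatio ^ i) (lo s T) = goldenRatio ^ (s + 1)) :
    T s = 1 ∧ FF (fun i => goldenRatio ^ i) (lo (s - 1) T) = goldenRatio ^ (s - 1) := by
  rw [FF_lo_step] at h
  have h1 := hT s
  have hlt := lo_FF_lt hT (s - 1)
  rw [show s - 1 + 2 = s + 1 by ring] at hlt
  have hs : T s = 1 := by
    by_contra hne
    have : T s = 0 := by omega
    rw [this] at h
    simp at h; linarith
  refine ⟨hs, ?_⟩
  rw [hs] at h
  have e : goldenRatio ^ (s - 1) = goldenRatio ^ (s + 1) - goldenRatio ^ s := by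
    rw [zpow_sub₀ gr_pos.ne', zpow_add₀ gr_pos.ne', zpow_one, div_eq_mul_inv, gr_inv]; ring
  rw [e]; push_cast at h; linarith

lemma pattern {T : BState} (hT : ∀ i, T i ≤ 1) (s : ℤ)
    (h : FF (fun i => goldenRatio ^ i) (lo s T) = goldenRatio ^ s) :
    ∃ k : ℕ, ∃ i₀ : ℤ, i₀ + 2 * k = s ∧ T i₀ = 1 ∧ (∀ j < i₀, T j = 0) ∧
      FF (fun _ => 1) (lo s T) = k + 1 ∧
      ∀ j : ℤ, 1 ≤ j → j ≤ k → T (i₀ + 2 * j - 1) = 1 ∧ T (i₀ + 2 * j) = 0 := by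
  have key : ∀ K : ℕ, ∀ s : ℤ, (∀ i ≤ s - K, T i = 0) →
      FF (fun i => goldenRatio ^ i) (lo s T) = goldenRatio ^ s →
      ∃ k : ℕ, ∃ i₀ : ℤ, i₀ + 2 * k = s ∧ T i₀ = 1 ∧ (∀ j < i₀, T j = 0) ∧
      FF (fun _ => 1) (lo s T) = k + 1 ∧
      ∀ j : ℤ, 1 ≤ j → j ≤ k → T (i₀ + 2 * j - 1) = 1 ∧ T (i₀ + 2 * j) = 0 := by
    intro K
    induction K with
    | zero =>
      intro s h hs
      exfalso
      have : lo s T = 0 := by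
        ext i; rw [lo_apply]; split_ifs with h1
        · exact h i (by simpa using h1)
        · rfl
      rw [this] at hs
      have h3 : 0 < goldenRatio ^ s := zpow_pos gr_pos _
      simp [FF] at hs; linarith
    | succ K ih =>
      intro s h hs
      have hs' := hs
      rw [FF_lo_step] at hs
      rcases Nat.le_one_iff_eq_zero_or_eq_one.1 (hT s) with h0 | h1
      · rw [h0] at hs
        obtain ⟨h3, h4⟩ := step_phi hT (s - 1) (by
          rw [show s - 1 + 1 = s by ring]; simpa using hs)
        obtain ⟨k, i₀, e, a, b, c, d⟩ := ih (s - 1 - 1)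
          (fun i hi => h i (by push_cast; omega)) h4
        refine ⟨k + 1, i₀, by push_cast; omega, a, b, ?_, ?_⟩
        · rw [FF_lo_step, FF_lo_step, c, h0, h3]; push_cast; ring
        · intro j hj1 hj2
          push_cast at hj2
          rcases eq_or_lt_of_le hj2 with rfl | hlt
          · rw [show i₀ + 2 * ((k : ℤ) + 1) - 1 = s - 1 by omega,
              show i₀ + 2 * ((k : ℤ) + 1) = s by omega]
            exact ⟨h3, h0⟩
          · exact d j hj1 (by omega)
      · rw [h1] at hs
        have hz : FF (fun i => goldenRatio ^ i) (lo (s - 1) T) = 0 := by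
          push_cast at hs; linarith
        have hz' := lo_eq_zero hz
        refine ⟨0, s, by simp, h1, ?_, ?_, ?_⟩
        · intro j hj
          have := DFunLike.congr_fun hz' j
          rw [lo_apply, if_pos (by omega)] at this
          simpa using this
        · rw [FF_lo_step, hz', h1]; simp [FF]
        · intro j hj1 hj2
          push_cast at hj2; omega
  obtain ⟨b, hb⟩ := T.support.bddBelow
  apply key (s - b + 1).toNat s _ h
  intro i hi
  by_contra hne
  have := hb (Finset.mem_coe.2 (Finsupp.mem_support_iff.2 hne))
  omega

lemma classify {x y : ℝ} (h : ZP x y) (h0 : 0 < x) (h1 : x < goldenRatio + 1)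
    (h2 : -0.86 ≤ y) (h3 : y ≤ 1.24) : x = 1 ∨ x = goldenRatio := by
  obtain ⟨a, b, rfl, rfl⟩ := h
  have g1 := gr_lo
  have g2 := gr_hi
  rw [gc_eq] at *
  have hb1 : b < 2 := by
    by_contra hc
    have : (2 : ℝ) ≤ b := by exact_mod_cast (not_lt.1 hc)
    nlinarith
  have hb0 : -1 < b := by
    by_contra hc
    have : (b : ℝ) ≤ -1 := by exact_mod_cast (not_lt.1 hc)
    nlinarith
  have : b = 0 ∨ b = 1 := by omega
  rcases this with rfl | rfl
  · left
    have ha1 : a < 2 := by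
      by_contra hc
      have : (2 : ℝ) ≤ a := by exact_mod_cast (not_lt.1 hc)
      push_cast at *
      linarith
    have ha0 : 0 < a := by
      push_cast at h0
      have : (0 : ℝ) < a := by linarith
      exact_mod_cast this
    have : a = 1 := by omega
    subst this; simp
  · right
    push_cast at *
    have ha1 : a < 1 := by
      have : (a : ℝ) < 1 := by linarith
      exact_mod_cast this
    have ha0 : -1 < a := by
      by_contra hc
      have : (a : ℝ) ≤ -1 := by exact_mod_cast (not_lt.1 hc)
      linarith
    have : a = 0 := by omega
    subst this; simp

lemma phi_eq : phi = goldenRatio := rfl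

lemma sq_le_pow (n : ℕ) (hn : 20 ≤ n) : (n : ℝ) ^ 2 < goldenRatio ^ (n - 7) := by
  induction n, hn using Nat.le_induction with
  | base =>
    norm_num
    calc (400 : ℝ) < (1.618 : ℝ) ^ 13 := by norm_num
      _ ≤ _ := pow_le_pow_left₀ (by norm_num) gr_lo.le _
  | succ n hn ih =>
    rw [show n + 1 - 7 = (n - 7) + 1 by omega, pow_succ goldenRatio]
    have h1 : (20 : ℝ) ≤ n := by exact_mod_cast hn
    push_cast
    have := gr_lo
    nlinarith

theorem bergman_phase_one_left_edge (n : ℕ) (hn : 20 ≤ n) :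
    ∃ T : BState, SplitReachable (initState n) T ∧ (∀ i, T i ≤ 1) ∧
      ∃ i₀ : ℤ, T i₀ = 1 ∧ (∀ j < i₀, T j = 0) ∧ T (i₀ + 1) = 1 ∧
        ∀ j : ℤ, 1 ≤ j → (j : ℝ) ≤ (n : ℝ) - 2 * logphi n - 7 →
          T (i₀ + 2 * j - 1) = 1 ∧ T (i₀ + 2 * j) = 0 ∧
            ((i₀ + 2 * j : ℤ) : ℝ) < -logphi n - 3 := by
  obtain ⟨T, hreach, hT, hI⟩ := stabilize n
  refine ⟨T, hreach, hT, ?_⟩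
  have hn0 : (0 : ℝ) < n := by exact_mod_cast (by omega : 0 < n)
  set L := logphi n with hL
  set l := ⌊L⌋ with hl
  have hL1 : (l : ℝ) ≤ L := Int.floor_le L
  have hL2 : L < l + 1 := Int.lt_floor_add_one L
  have hpow : goldenRatio ^ L = n := by
    rw [hL, logphi, phi_eq]
    exact Real.rpow_logb gr_pos gr_one.ne' hn0
  have hlt : (n : ℝ) < goldenRatio ^ (l + 1) := by
    rw [← hpow, ← Real.rpow_intCast]
    apply Real.rpow_lt_rpow_of_exponent_lt gr_one
    push_cast; exact hL2
  have hle : goldenRatio ^ l ≤ (n : ℝ) := by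
    rw [← hpow, ← Real.rpow_intCast]
    exact Real.rpow_le_rpow_of_exponent_le gr_one.le hL1
  have hl0 : 0 ≤ l := by
    by_contra hc
    have : goldenRatio ^ (l + 1) ≤ 1 := zpow_le_one_of_nonpos₀ gr_one.le (by omega)
    have : (20 : ℝ) ≤ n := by exact_mod_cast hn
    linarith
  -- size of l
  have hln : 2 * l + 7 < n := by
    have h1 : goldenRatio ^ (l + l) < goldenRatio ^ ((n : ℤ) - 7) := by
      have h2 := sq_le_pow n hn
      rw [zpow_add₀ gr_pos.ne']
      have e : goldenRatio ^ ((n : ℤ) - 7) = goldenRatio ^ (n - 7) := by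
        rw [← zpow_natCast]; congr 1; omega
      rw [e]
      have h0 := zpow_pos gr_pos l
      nlinarith
    have := (zpow_lt_zpow_iff_right₀ gr_one).1 h1
    omega
  -- right bound
  have htop : ∀ i, l < i → T i = 0 := by
    intro i hi
    by_contra hne
    have h1 := FF_term_le (f := fun i => goldenRatio ^ i) (S := T)
      (fun i => (zpow_pos gr_pos _).le) i (by omega)
    rw [hI.val] at h1
    have := lt_of_le_of_lt h1 hlt
    have := (zpow_lt_zpow_iff_right₀ gr_one).1 this
    omega
  set s : ℤ := -(l + 4) with hs
  -- count
  have hcnt : FF (fun _ => 1) (hi s T) ≤ 2 * l + 4 := by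
    have h1 : FF (fun _ => 1) (hi s T) ≤ ((hi s T).support.card : ℝ) := by
      unfold FF Finsupp.sum
      rw [Finset.card_eq_sum_ones]
      push_cast
      apply Finset.sum_le_sum
      intro i _
      have : hi s T i ≤ 1 := by
        rw [hi_apply]; split_ifs
        · omega
        · exact hT i
      simpa using this
    have h2 : (hi s T).support ⊆ Finset.Ioc s l := by
      intro i hi
      rw [Finsupp.mem_support_iff, hi_apply] at hi
      split_ifs at hi with h3
      · exact absurd rfl hi
      · rw [Finset.mem_Ioc]
        refine ⟨by omega, ?_⟩
        by_contra hc
        exact hi (htop i (by omega))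
    have h3 := Finset.card_le_card h2
    rw [Int.card_Ioc] at h3
    have h4 : ((hi s T).support.card : ℤ) ≤ 2 * l + 4 := by omega
    have h5 : ((hi s T).support.card : ℝ) ≤ 2 * l + 4 := by exact_mod_cast h4
    linarith
  have hclo : (n : ℝ) - 2 * l - 4 ≤ FF (fun _ => 1) (lo s T) := by
    have := FF_lo_hi (fun _ => 1) s T
    rw [hI.cnt] at this
    linarith
  have hlnR : 2 * (l : ℝ) + 7 < n := by exact_mod_cast hln
  -- classification
  have hxpos : 0 < FF (fun i => goldenRatio ^ i) (lo s T) := by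
    refine lt_of_le_of_ne (FF_nonneg fun i => (zpow_pos gr_pos _).le) fun h => ?_
    have := lo_eq_zero h.symm
    rw [this] at hclo
    simp [FF] at hclo
    linarith
  have hp := zpow_pos gr_pos s
  have hpn : goldenRatio ^ (-s) * goldenRatio ^ s = 1 := by
    rw [← zpow_add₀ gr_pos.ne']; simp
  have hpp := zpow_pos gr_pos (-s)
  have hcl : FF (fun i => goldenRatio ^ (i - s)) (lo s T) = 1 ∨
      FF (fun i => goldenRatio ^ (i - s)) (lo s T) = goldenRatio := by
    obtain ⟨r1, r2⟩ := hi_FF_bd hT s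
    have hy : FF (fun i => goldenConj ^ (i - s)) (lo s T)
      = goldenConj ^ (-s) * n - FF (fun i => goldenConj ^ (i - s)) (hi s T) := by
      have e1 := FF_lo_hi (fun i => goldenConj ^ (i - s)) s T
      rw [FF_shift gc_ne, hI.con] at e1
      linarith
    have hsmall : |goldenConj ^ (-s) * n| ≤ 0.2362 := by
      rw [abs_mul, Nat.abs_cast, abs_zpow, gc_abs, inv_zpow, zpow_neg, inv_inv]
      have e : goldenRatio ^ s * goldenRatio ^ (l + 1) = (goldenRatio - 1) ^ 3 := by
        rw [← zpow_add₀ gr_pos.ne', ← gr_inv, inv_pow, ← zpow_natCast, ← zpow_neg]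
        congr 1; push_cast; omega
      have h1 : goldenRatio ^ s * n ≤ goldenRatio ^ s * goldenRatio ^ (l + 1) := by gcongr
      have h2 : (goldenRatio - 1) ^ 3 ≤ (0.6181 : ℝ) ^ 3 :=
        pow_le_pow_left₀ (by linarith [gr_one]) (by linarith [gr_hi]) _
      norm_num at h2 ⊢
      linarith
    rw [abs_le] at hsmall
    have g2 := gr_hi
    apply classify (ZP.FF s (lo s T))
    · rw [FF_shift gr_pos.ne']; positivity
    · rw [FF_shift gr_pos.ne']
      have := lo_FF_lt hT s
      have e : goldenRatio + 1 = goldenRatio ^ (-s) * goldenRatio ^ (s + 2) := by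
        rw [zpow_add₀ gr_pos.ne', ← mul_assoc, hpn, zpow_ofNat, goldenRatio_sq, one_mul]
      rw [e]
      gcongr
    · rw [hy]; norm_num at hsmall ⊢; linarith
    · rw [hy]; norm_num at hsmall ⊢; linarith
  have hfin : ∃ k : ℕ, ∃ i₀ : ℤ, i₀ + 2 * k ≤ s ∧ T i₀ = 1 ∧ (∀ j < i₀, T j = 0) ∧
      (n : ℤ) - 2 * l - 6 ≤ k ∧
      ∀ j : ℤ, 1 ≤ j → j ≤ k → T (i₀ + 2 * j - 1) = 1 ∧ T (i₀ + 2 * j) = 0 := by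
    rw [FF_shift gr_pos.ne'] at hcl
    set V := FF (fun i => goldenRatio ^ i) (lo s T) with hV
    have hVe : V = goldenRatio ^ s * (goldenRatio ^ (-s) * V) := by
      rw [← mul_assoc, mul_comm (goldenRatio ^ s), hpn, one_mul]
    rcases hcl with h | h
    · rw [h, mul_one] at hVe
      obtain ⟨k, i₀, e, a, b, c, d⟩ := pattern hT s hVe
      refine ⟨k, i₀, e.le, a, b, ?_, d⟩
      rw [c] at hclo
      have : (n : ℝ) - 2 * l - 6 ≤ k := by linarith
      exact_mod_cast this
    · rw [h] at hVe
      obtain ⟨h1, h2⟩ := step_phi hT s (by rw [← hV, hVe, zpow_add₀ gr_pos.ne', zpow_one])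
      obtain ⟨k, i₀, e, a, b, c, d⟩ := pattern hT (s - 1) h2
      refine ⟨k, i₀, by omega, a, b, ?_, d⟩
      rw [FF_lo_step, c, h1] at hclo
      have : (n : ℝ) - 2 * l - 6 ≤ k := by push_cast at hclo; linarith
      exact_mod_cast this
  obtain ⟨k, i₀, e, a, b, c, d⟩ := hfin
  refine ⟨i₀, a, b, ?_, ?_⟩
  · have := (d 1 le_rfl (by omega)).1
    rwa [show i₀ + 2 * 1 - 1 = i₀ + 1 by ring] at this
  · intro j hj1 hj2
    have hjk : j ≤ k := by
      have h1 : (j : ℝ) ≤ n - 2 * l - 7 := by linarith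
      have h2 : j ≤ (n : ℤ) - 2 * l - 7 := by exact_mod_cast h1
      omega
    obtain ⟨d1, d2⟩ := d j hj1 hjk
    refine ⟨d1, d2, ?_⟩
    have h1 : i₀ + 2 * j ≤ -(l + 4) := by omega
    have h2 : ((i₀ + 2 * j : ℤ) : ℝ) ≤ -((l : ℝ) + 4) := by exact_mod_cast h1
    linarith
end
end
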